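/- arXiv:1107.4378 — 6 statements merged into one kernel-verified Lean document; each statement's English description precedes it below -/
import Mathlib

section
/- Fix a constant ε > 0. There exist a constant α > 0 and a threshold m₀ (both depending only on ε) such that for all integers m ≥ m₀ and n ≥ 1 with (1+ε)·n ≤ m, every vertex v of the random cuckoo graph with n edges on parts of size m, and every natural number j with 1 ≤ j ≤ m^{1/6}, Pr(B_v ≥ j+1) ≤ m^{−1−α·j}. -/
open Classical

/-- Adjacency: item `x` gives an edge from left vertex `h₀ x` to right vertex `h₁ x`. -/
def cuckooAdj (n m : ℕ) (h₀ h₁ : Fin n → Fin m) (a b : Fin m ⊕ Fin m) : Prop :=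
  ∃ x : Fin n, a = Sum.inl (h₀ x) ∧ b = Sum.inr (h₁ x)

/-- Connectivity in the cuckoo graph: equivalence generated by adjacency. -/
def cuckooConn (n m : ℕ) (h₀ h₁ : Fin n → Fin m) : (Fin m ⊕ Fin m) → (Fin m ⊕ Fin m) → Prop :=
  Relation.EqvGen (cuckooAdj n m h₀ h₁)

/-- `C(v)`: number of edges (items, with multiplicity) in the component of `v`. -/
noncomputable def cuckooC (n m : ℕ) (h₀ h₁ : Fin n → Fin m) (v : Fin m ⊕ Fin m) : ℕ :=
  Nat.card {x : Fin n // cuckooConn n m h₀ h₁ (Sum.inl (h₀ x)) v}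

/-- `V(v)`: number of vertices in the component of `v`. -/
noncomputable def cuckooV (n m : ℕ) (h₀ h₁ : Fin n → Fin m) (v : Fin m ⊕ Fin m) : ℕ :=
  Nat.card {u : Fin m ⊕ Fin m // cuckooConn n m h₀ h₁ u v}

/-- `B_v`: cyclotomic number of the component of `v`, `C(v) − V(v) + 1`. -/
noncomputable def cuckooB (n m : ℕ) (h₀ h₁ : Fin n → Fin m) (v : Fin m ⊕ Fin m) : ℕ :=
  cuckooC n m h₀ h₁ v + 1 - cuckooV n m h₀ h₁ v

/-- The sample space: a pair of hash functions chosen uniformly at random. -/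
abbrev HashPair (n m : ℕ) := (Fin n → Fin m) × (Fin n → Fin m)

/-- Probability of an event under uniformly random hash functions. -/
noncomputable def cuckooPr (n m : ℕ) (E : HashPair n m → Prop) : ℝ :=
  (Nat.card {ω : HashPair n m // E ω} : ℝ) / (Nat.card (HashPair n m) : ℝ)

/-- Expectation of a real random variable under uniformly random hash functions. -/
noncomputable def cuckooE (n m : ℕ) (f : HashPair n m → ℝ) : ℝ :=
  (∑ ω : HashPair n m, f ω) / (Nat.card (HashPair n m) : ℝ)

/-- `X_i`: number of vertices lying in components with exactly `i` edges. -/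
noncomputable def cuckooX (n m : ℕ) (h₀ h₁ : Fin n → Fin m) (i : ℕ) : ℕ :=
  Nat.card {v : Fin m ⊕ Fin m // cuckooC n m h₀ h₁ v = i}

/-- The setoid of connected components. -/
def cuckooSetoid (n m : ℕ) (h₀ h₁ : Fin n → Fin m) : Setoid (Fin m ⊕ Fin m) :=
  ⟨cuckooConn n m h₀ h₁, Relation.EqvGen.is_equivalence _⟩

/-- `ē(G) = ∑_H max(e(H),0)`, the total excess over all components
(`ℕ`-subtraction realizes the `max` with `0`). -/
noncomputable def cuckooEbar (n m : ℕ) (h₀ h₁ : Fin n → Fin m) : ℕ :=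
  ∑ᶠ c : Quotient (cuckooSetoid n m h₀ h₁),
    (Nat.card {x : Fin n // Quotient.mk (cuckooSetoid n m h₀ h₁) (Sum.inl (h₀ x)) = c}
      - Nat.card {u : Fin m ⊕ Fin m // Quotient.mk (cuckooSetoid n m h₀ h₁) u = c})

/-- The pair of hash values of an edge leaving `u` towards the `t`-th vertex of the other side. -/
def ckPr {m : ℕ} (u : Fin m ⊕ Fin m) (t : Fin m) : Fin m × Fin m :=
  match u with
  | Sum.inl a => (a, t)
  | Sum.inr b => (t, b)

/-- The `t`-th vertex on the side opposite to `u`. -/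
def ckOpp {m : ℕ} (u : Fin m ⊕ Fin m) (t : Fin m) : Fin m ⊕ Fin m :=
  match u with
  | Sum.inl _ => Sum.inr t
  | Sum.inr _ => Sum.inl t

lemma ckOpp_inj {m : ℕ} (u : Fin m ⊕ Fin m) : Function.Injective (ckOpp u) := by
  intro s t h
  cases u <;> simpa [ckOpp] using h

/-- Certificate: starting at `u`, with known vertices `K` and used items `S`, one can close
`r` ears within `N` steps. -/
def ckCert {n m : ℕ} (e : Fin n → Fin m × Fin m) :
    ℕ → ℕ → Finset (Fin m ⊕ Fin m) → (Fin m ⊕ Fin m) → Finset (Fin n) → Prop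
  | _, 0, _, _, _ => True
  | 0, _ + 1, _, _, _ => False
  | N + 1, r + 1, K, u, S =>
    (∃ x, x ∉ S ∧ ∃ t, e x = ckPr u t ∧
      ckCert e N (r + 1) (insert (ckOpp u t) K) (ckOpp u t) (insert x S)) ∨
    (∃ x, x ∉ S ∧ ∃ t, ckOpp u t ∈ K ∧ ∃ u', u' ∈ K ∧ e x = ckPr u t ∧
      ckCert e N r K u' (insert x S))

lemma ck_base {n m : ℕ} (S : Finset (Fin n)) (φ : Fin n → Fin m × Fin m) :
    (Finset.univ.filter (fun e : Fin n → Fin m × Fin m => ∀ x ∈ S, e x = φ x)).card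
      = (m * m) ^ (n - S.card) := by
  have : (Finset.univ.filter (fun e : Fin n → Fin m × Fin m => ∀ x ∈ S, e x = φ x))
      = Fintype.piFinset (fun x => if x ∈ S then {φ x} else Finset.univ) := by
    ext e
    simp only [Finset.mem_filter, Finset.mem_univ, true_and, Fintype.mem_piFinset]
    refine forall_congr' fun x => ?_
    by_cases hx : x ∈ S <;> simp [hx]
  rw [this, Fintype.card_piFinset]
  have h2 : ∀ x : Fin n, (if x ∈ S then ({φ x} : Finset (Fin m × Fin m)) else Finset.univ).card
      = if x ∈ S then 1 else m * m := by
    intro x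
    by_cases hx : x ∈ S <;> simp [hx]
  simp_rw [h2]
  rw [Finset.prod_ite]
  simp only [Finset.prod_const_one, one_mul, Finset.prod_const]
  congr 1
  have : (Finset.univ.filter (fun x => x ∉ S)) = Sᶜ := by ext; simp
  rw [this, Finset.card_compl, Fintype.card_fin]

/-- The set counted in the union bound. -/
noncomputable def ckSet {n m : ℕ} (N r : ℕ) (K : Finset (Fin m ⊕ Fin m)) (u : Fin m ⊕ Fin m)
    (S : Finset (Fin n)) (φ : Fin n → Fin m × Fin m) : Finset (Fin n → Fin m × Fin m) :=
  Finset.univ.filter (fun e => (∀ x ∈ S, e x = φ x) ∧ ckCert e N r K u S)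

lemma ck_step {n m : ℕ} (N r : ℕ) (K : Finset (Fin m ⊕ Fin m)) (u : Fin m ⊕ Fin m)
    (S : Finset (Fin n)) (φ : Fin n → Fin m × Fin m) :
    ckSet (N + 1) (r + 1) K u S φ ⊆
      (Sᶜ.biUnion fun x => Finset.univ.biUnion fun t =>
        ckSet N (r + 1) (insert (ckOpp u t) K) (ckOpp u t) (insert x S)
          (Function.update φ x (ckPr u t))) ∪
      (Sᶜ.biUnion fun x => (Finset.univ.filter fun t => ckOpp u t ∈ K).biUnion fun t =>
        K.biUnion fun u' => ckSet N r K u' (insert x S) (Function.update φ x (ckPr u t))) := by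
  have key : ∀ (e : Fin n → Fin m × Fin m) (x : Fin n) (t : Fin m), x ∉ S →
      (∀ y ∈ S, e y = φ y) → e x = ckPr u t →
      ∀ y ∈ insert x S, e y = Function.update φ x (ckPr u t) y := by
    intro e x t hx h1 h2 y hy
    rcases Finset.mem_insert.1 hy with rfl | hy
    · simp [h2]
    · have : y ≠ x := fun h => hx (h ▸ hy)
      rw [Function.update_of_ne this, h1 y hy]
  intro e he
  have he' := (Finset.mem_filter.1 he).2
  simp only [ckCert] at he'
  obtain ⟨h1, h | h⟩ := he'
  · obtain ⟨x, hx, t, h2, h3⟩ := h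
    refine Finset.mem_union_left _ ?_
    refine Finset.mem_biUnion.2 ⟨x, by simpa using hx, Finset.mem_biUnion.2 ⟨t, by simp, ?_⟩⟩
    exact Finset.mem_filter.2 ⟨Finset.mem_univ _, key e x t hx h1 h2, h3⟩
  · obtain ⟨x, hx, t, ht, u', hu', h2, h3⟩ := h
    refine Finset.mem_union_right _ ?_
    refine Finset.mem_biUnion.2 ⟨x, by simpa using hx, Finset.mem_biUnion.2 ⟨t, by simpa using ht,
      Finset.mem_biUnion.2 ⟨u', hu', ?_⟩⟩⟩
    exact Finset.mem_filter.2 ⟨Finset.mem_univ _, key e x t hx h1 h2, h3⟩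

lemma ck_card_biUnion_le {ι β : Type*} [DecidableEq β] (s : Finset ι) (f : ι → Finset β)
    (b : ℝ) (h : ∀ i ∈ s, ((f i).card : ℝ) ≤ b) : ((s.biUnion f).card : ℝ) ≤ s.card * b := by
  calc ((s.biUnion f).card : ℝ) ≤ ((∑ i ∈ s, (f i).card : ℕ) : ℝ) := by
        exact_mod_cast Finset.card_biUnion_le
    _ = ∑ i ∈ s, ((f i).card : ℝ) := by push_cast; rfl
    _ ≤ ∑ _i ∈ s, b := Finset.sum_le_sum h
    _ = s.card * b := by simp

lemma ck_count {n m : ℕ} (hm : 0 < m) (R : ℕ) (B : ℕ → ℕ → ℝ)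
    (hB0 : ∀ r k, 0 ≤ B r k) (hB1 : ∀ k, 1 ≤ B 0 k) (hmono : ∀ r, Monotone (B r))
    (hrec : ∀ r k, r + 1 ≤ R → (n : ℝ) / m * B (r + 1) (k + 1) +
      (n : ℝ) / (m * m) * (k * k) * B r k ≤ B (r + 1) k) :
    ∀ (N r : ℕ) (K : Finset (Fin m ⊕ Fin m)) (u : Fin m ⊕ Fin m)
    (S : Finset (Fin n)) (φ : Fin n → Fin m × Fin m), r ≤ R →
      ((ckSet N r K u S φ).card : ℝ) ≤ ((m : ℝ) * m) ^ (n - S.card) * B r K.card := by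
  have hM : (0 : ℝ) < (m : ℝ) * m := by positivity
  have hzero : ∀ (N : ℕ) (K : Finset (Fin m ⊕ Fin m)) (u : Fin m ⊕ Fin m)
    (S : Finset (Fin n)) (φ : Fin n → Fin m × Fin m),
      ((ckSet N 0 K u S φ).card : ℝ) ≤ ((m : ℝ) * m) ^ (n - S.card) * B 0 K.card := by
    intro N K u S φ
    have h1 : (ckSet N 0 K u S φ).card ≤ (m * m) ^ (n - S.card) := by
      rw [← ck_base S φ]
      refine Finset.card_le_card fun e he => ?_
      simp only [ckSet, Finset.mem_filter] at he
      simpa using he.2.1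
    calc ((ckSet N 0 K u S φ).card : ℝ) ≤ ((m : ℝ) * m) ^ (n - S.card) := by exact_mod_cast h1
      _ ≤ _ := le_mul_of_one_le_right (by positivity) (hB1 _)
  intro N
  induction N with
  | zero =>
    intro r K u S φ hr
    cases r with
    | zero => exact hzero _ _ _ _ _
    | succ r =>
      have : ckSet 0 (r + 1) K u S φ = ∅ := by
        simp [ckSet, ckCert]
      rw [this]
      have := hB0 (r + 1) K.card
      simp only [Finset.card_empty, Nat.cast_zero]
      positivity
  | succ N ih =>
    intro r K u S φ hr
    cases r with
    | zero => exact hzero _ _ _ _ _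
    | succ r =>
      set k := K.card with hk
      set P : ℝ := ((m : ℝ) * m) ^ (n - (S.card + 1)) with hP
      have hPpos : 0 < P := by positivity
      have b1 := hB0 (r + 1) (k + 1)
      have b2 := hB0 r k
      have b3 := hB0 (r + 1) k
      have H1 : ((Sᶜ.biUnion fun x => (Finset.univ : Finset (Fin m)).biUnion fun t =>
          ckSet N (r + 1) (insert (ckOpp u t) K) (ckOpp u t) (insert x S)
          (Function.update φ x (ckPr u t))).card : ℝ) ≤ Sᶜ.card * (m * (P * B (r + 1) (k + 1))) := by
        refine ck_card_biUnion_le _ _ _ fun x hx => ?_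
        have hx' : x ∉ S := by simpa using hx
        have := ck_card_biUnion_le (Finset.univ : Finset (Fin m)) (fun t =>
          ckSet N (r + 1) (insert (ckOpp u t) K) (ckOpp u t) (insert x S)
          (Function.update φ x (ckPr u t))) (P * B (r + 1) (k + 1)) (fun t _ => by
            refine (ih _ _ _ _ _ hr).trans ?_
            rw [Finset.card_insert_of_notMem hx']
            refine mul_le_mul_of_nonneg_left (hmono _ (Finset.card_insert_le _ _)) hPpos.le)
        simpa using this
      have H2 : ((Sᶜ.biUnion fun x => (Finset.univ.filter fun t => ckOpp u t ∈ K).biUnion fun t =>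
          K.biUnion fun u' => ckSet N r K u' (insert x S)
            (Function.update φ x (ckPr u t))).card : ℝ) ≤ Sᶜ.card * (k * (k * (P * B r k))) := by
        refine ck_card_biUnion_le _ _ _ fun x hx => ?_
        have hx' : x ∉ S := by simpa using hx
        refine (ck_card_biUnion_le _ _ (k * (P * B r k)) fun t _ => ?_).trans ?_
        · refine ck_card_biUnion_le _ _ _ fun u' _ => ?_
          refine (ih _ _ _ _ _ (by omega)).trans ?_
          rw [Finset.card_insert_of_notMem hx']
        · refine mul_le_mul_of_nonneg_right ?_ (by positivity)
          have : (Finset.univ.filter fun t => ckOpp u t ∈ K).card ≤ K.card :=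
            Finset.card_le_card_of_injOn (ckOpp u) (fun t ht => by simpa using ht)
              (ckOpp_inj u).injOn
          exact_mod_cast this
      have H : ((ckSet (N + 1) (r + 1) K u S φ).card : ℝ) ≤
          Sᶜ.card * (m * (P * B (r + 1) (k + 1))) + Sᶜ.card * (k * (k * (P * B r k))) := by
        refine le_trans ?_ (add_le_add H1 H2)
        have := (Finset.card_le_card (ck_step N r K u S φ)).trans (Finset.card_union_le _ _)
        exact_mod_cast this
      refine H.trans ?_
      rw [Finset.card_compl, Fintype.card_fin]
      rcases Nat.eq_zero_or_pos (n - S.card) with h0 | h0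
      · rw [h0]; simpa using b3
      · have e1 : n - S.card = (n - (S.card + 1)) + 1 := by omega
        have e2 : ((n - S.card : ℕ) : ℝ) ≤ n := by exact_mod_cast Nat.sub_le _ _
        have e3 : ((m : ℝ) * m) ^ (n - S.card) = P * ((m : ℝ) * m) := by
          rw [hP, ← pow_succ, ← e1]
        rw [e3]
        have hm' : (0 : ℝ) < m := by exact_mod_cast hm
        calc ((n - S.card : ℕ) : ℝ) * (m * (P * B (r + 1) (k + 1)))
              + ((n - S.card : ℕ) : ℝ) * (k * (k * (P * B r k)))
            ≤ (n : ℝ) * (m * (P * B (r + 1) (k + 1))) + (n : ℝ) * (k * (k * (P * B r k))) := by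
              gcongr
          _ = P * ((m : ℝ) * m) * ((n : ℝ) / m * B (r + 1) (k + 1) +
                (n : ℝ) / (m * m) * (k * k) * B r k) := by
              field_simp
          _ ≤ _ := mul_le_mul_of_nonneg_left (hrec r k hr) (by positivity)

/-- `x` joins `u` and `w`. -/
def ckE {n m : ℕ} (e : Fin n → Fin m × Fin m) (u : Fin m ⊕ Fin m) (x : Fin n)
    (w : Fin m ⊕ Fin m) : Prop := ∃ t, e x = ckPr u t ∧ w = ckOpp u t

lemma ckE_iff {n m : ℕ} (e : Fin n → Fin m × Fin m) (u : Fin m ⊕ Fin m) (x : Fin n)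
    (w : Fin m ⊕ Fin m) : ckE e u x w ↔ (u = Sum.inl (e x).1 ∧ w = Sum.inr (e x).2) ∨
      (u = Sum.inr (e x).2 ∧ w = Sum.inl (e x).1) := by
  rcases u with a | b
  · simp only [ckE, ckPr, ckOpp, Prod.ext_iff]
    aesop
  · simp only [ckE, ckPr, ckOpp, Prod.ext_iff]
    aesop

lemma ckE_symm {n m : ℕ} {e : Fin n → Fin m × Fin m} {u w : Fin m ⊕ Fin m} {x : Fin n}
    (h : ckE e u x w) : ckE e w x u := by
  rw [ckE_iff] at *
  tauto

lemma ckE_ne {n m : ℕ} {e : Fin n → Fin m × Fin m} {u w : Fin m ⊕ Fin m} {x : Fin n}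
    (h : ckE e u x w) : u ≠ w := by
  rw [ckE_iff] at h
  rcases h with ⟨rfl, rfl⟩ | ⟨rfl, rfl⟩ <;> simp

lemma ckE_exists {n m : ℕ} (e : Fin n → Fin m × Fin m) (x : Fin n) :
    ∃ u w, ckE e u x w := ⟨Sum.inl (e x).1, Sum.inr (e x).2, by simp [ckE_iff]⟩

lemma ckE_unique {n m : ℕ} {e : Fin n → Fin m × Fin m} {u w u' w' : Fin m ⊕ Fin m} {x : Fin n}
    (h : ckE e u x w) (h' : ckE e u' x w') : (u' = u ∧ w' = w) ∨ (u' = w ∧ w' = u) := by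
  rw [ckE_iff] at *
  aesop

/-- A connected subgraph (vertices `P`, edges `E`) containing `v`. -/
structure ckGood {n m : ℕ} (e : Fin n → Fin m × Fin m) (v : Fin m ⊕ Fin m)
    (P : Finset (Fin m ⊕ Fin m)) (E : Finset (Fin n)) : Prop where
  hv : v ∈ P
  ends : ∀ x ∈ E, ∀ u w, ckE e u x w → u ∈ P
  cut : ∀ K ⊆ P, v ∈ K → K ≠ P → ∃ x ∈ E, ∃ u ∈ K, ∃ w ∈ P, w ∉ K ∧ ckE e u x w

lemma ckGood_remove {n m : ℕ} {e : Fin n → Fin m × Fin m} {v : Fin m ⊕ Fin m}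
    {P : Finset (Fin m ⊕ Fin m)} {E : Finset (Fin n)} (h : ckGood e v P E)
    {p q : Fin m ⊕ Fin m} {x : Fin n} (hpv : p ≠ v) (hp : p ∈ P) (hpq : ckE e p x q)
    (huniq : ∀ y ∈ E, ∀ w, ckE e p y w → y = x) :
    ckGood e v (P.erase p) (E.erase x) := by
  refine ⟨Finset.mem_erase.2 ⟨hpv.symm, h.hv⟩, ?_, ?_⟩
  · intro y hy u w huw
    obtain ⟨hyx, hyE⟩ := Finset.mem_erase.1 hy
    refine Finset.mem_erase.2 ⟨?_, h.ends y hyE u w huw⟩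
    rintro rfl
    exact hyx (huniq y hyE w huw)
  · intro K hK hvK hKP
    have hpK : p ∉ K := fun hh => by simpa using hK hh
    have hKP' : K ⊆ P := hK.trans (Finset.erase_subset _ _)
    by_cases hq : q ∈ K
    · obtain ⟨y, hy, u, hu, w, hw, hwK, hE⟩ := h.cut (insert p K)
        (Finset.insert_subset hp hKP') (Finset.mem_insert_of_mem hvK) (by
          intro hh
          apply hKP
          rw [← hh, Finset.erase_insert hpK])
      have hyx : y ≠ x := by
        rintro rfl
        rcases ckE_unique hpq hE with ⟨_, rfl⟩ | ⟨_, rfl⟩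
        · exact hwK (Finset.mem_insert_of_mem hq)
        · exact hwK (Finset.mem_insert_self _ _)
      have hup : u ≠ p := by
        rintro rfl
        exact hyx (huniq y hy w hE)
      refine ⟨y, Finset.mem_erase.2 ⟨hyx, hy⟩, u, Finset.mem_of_mem_insert_of_ne hu hup, w,
        Finset.mem_erase.2 ⟨?_, hw⟩, fun hh => hwK (Finset.mem_insert_of_mem hh), hE⟩
      rintro rfl
      exact hwK (Finset.mem_insert_self _ _)
    · obtain ⟨y, hy, u, hu, w, hw, hwK, hE⟩ := h.cut K hKP' hvK (by
        rintro rfl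
        exact hpK hp)
      have hyx : y ≠ x := by
        rintro rfl
        rcases ckE_unique hpq hE with ⟨rfl, _⟩ | ⟨rfl, _⟩
        · exact hpK hu
        · exact hq hu
      refine ⟨y, Finset.mem_erase.2 ⟨hyx, hy⟩, u, hu, w, Finset.mem_erase.2 ⟨?_, hw⟩, hwK, hE⟩
      rintro rfl
      exact hyx (huniq y hy u (ckE_symm hE))

lemma ckGood_prune {n m : ℕ} {e : Fin n → Fin m × Fin m} {v : Fin m ⊕ Fin m} (j : ℕ) :
    ∀ (c : ℕ) (P : Finset (Fin m ⊕ Fin m)) (E : Finset (Fin n)), P.card = c → ckGood e v P E →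
      P.card + j ≤ E.card → ∃ P' E', ckGood e v P' E' ∧ P'.card + j ≤ E'.card ∧
        ∀ p ∈ P', p ≠ v → ∀ x ∈ E', ∀ q, ckE e p x q → ∃ y ∈ E', y ≠ x ∧ ∃ w, ckE e p y w := by
  intro c
  induction c with
  | zero =>
    intro P E hc h _
    have := h.hv
    rw [Finset.card_eq_zero.1 hc] at this
    simp at this
  | succ c ih =>
    intro P E hc h hj
    by_cases hall : ∀ p ∈ P, p ≠ v → ∀ x ∈ E, ∀ q, ckE e p x q →
        ∃ y ∈ E, y ≠ x ∧ ∃ w, ckE e p y w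
    · exact ⟨P, E, h, hj, hall⟩
    · push Not at hall
      obtain ⟨p, hp, hpv, x, hx, q, hpq, hn⟩ := hall
      have hu : ∀ y ∈ E, ∀ w, ckE e p y w → y = x := by
        intro y hy w hw
        by_contra hne
        exact hn y hy hne w hw
      have c1 := Finset.card_erase_of_mem hp
      have c2 := Finset.card_erase_of_mem hx
      exact ih (P.erase p) (E.erase x) (by omega) (ckGood_remove h hpv hp hpq hu) (by omega)

lemma ck_next {n m : ℕ} {e : Fin n → Fin m × Fin m} {v : Fin m ⊕ Fin m}
    {P : Finset (Fin m ⊕ Fin m)} {E : Finset (Fin n)} (h : ckGood e v P E)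
    {K : Finset (Fin m ⊕ Fin m)} {S : Finset (Fin n)} (hK : K ⊆ P) (hv : v ∈ K)
    (hS : ∀ x ∈ S, ∀ u w, ckE e u x w → u ∈ K) (hcard : S.card < E.card) :
    ∃ u ∈ K, ∃ x ∈ E, x ∉ S ∧ ∃ w, ckE e u x w := by
  by_cases hKP : K = P
  · obtain ⟨x, hx, hxS⟩ := Finset.exists_mem_notMem_of_card_lt_card hcard
    obtain ⟨u, w, hE⟩ := ckE_exists e x
    exact ⟨u, hKP ▸ h.ends x hx u w hE, x, hx, hxS, w, hE⟩
  · obtain ⟨x, hx, u, hu, w, hw, hwK, hE⟩ := h.cut K hK hv hKP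
    exact ⟨u, hu, x, hx, fun hxS => hwK (hS x hxS w u (ckE_symm hE)), w, hE⟩

lemma ck_walk {n m : ℕ} {e : Fin n → Fin m × Fin m} {v : Fin m ⊕ Fin m}
    {P : Finset (Fin m ⊕ Fin m)} {E : Finset (Fin n)} (h : ckGood e v P E)
    (hdeg : ∀ p ∈ P, p ≠ v → ∀ x ∈ E, ∀ q, ckE e p x q → ∃ y ∈ E, y ≠ x ∧ ∃ w, ckE e p y w) :
    ∀ (N r : ℕ) (K : Finset (Fin m ⊕ Fin m)) (u : Fin m ⊕ Fin m) (S : Finset (Fin n)),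
      K ⊆ P → v ∈ K → S ⊆ E → (∀ x ∈ S, ∀ a b, ckE e a x b → a ∈ K) →
      u ∈ K → (∃ x ∈ E, x ∉ S ∧ ∃ w, ckE e u x w) →
      S.card + P.card + r ≤ E.card + K.card → E.card ≤ S.card + N →
      ckCert e N r K u S := by
  intro N
  induction N with
  | zero =>
    intro r K u S hK hv hS hSK hu ⟨x, hx, hxS, w, hw⟩ hcard hN
    have := Finset.card_lt_card (Finset.ssubset_iff_of_subset hS |>.2 ⟨x, hx, hxS⟩)
    omega
  | succ N ih =>
    intro r K u S hK hv hS hSK hu ⟨x, hx, hxS, w, hw⟩ hcard hN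
    cases r with
    | zero => simp [ckCert]
    | succ r =>
      have hSx : (insert x S).card = S.card + 1 := Finset.card_insert_of_notMem hxS
      have hSE : insert x S ⊆ E := Finset.insert_subset hx hS
      have hwP : w ∈ P := h.ends x hx w u (ckE_symm hw)
      by_cases hwK : w ∈ K
      · have hSK' : ∀ y ∈ insert x S, ∀ a b, ckE e a y b → a ∈ K := by
          intro y hy a b hab
          rcases Finset.mem_insert.1 hy with rfl | hy
          · rcases ckE_unique hw hab with ⟨rfl, _⟩ | ⟨rfl, _⟩ <;> assumption
          · exact hSK y hy a b hab
        have hKP := Finset.card_le_card hK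
        have : ∃ u' ∈ K, ckCert e N r K u' (insert x S) := by
          rcases Nat.eq_zero_or_pos r with rfl | hr
          · exact ⟨u, hu, by cases N <;> simp [ckCert]⟩
          · obtain ⟨u', hu', hx'⟩ := ck_next h hK hv hSK' (by omega)
            exact ⟨u', hu', ih r K u' (insert x S) hK hv hSE hSK' hu' hx' (by omega) (by omega)⟩
        obtain ⟨u', hu', hc⟩ := this
        obtain ⟨t, ht, rfl⟩ := hw
        exact Or.inr ⟨x, hxS, t, hwK, u', hu', ht, hc⟩
      · have hwv : w ≠ v := fun hh => hwK (hh ▸ hv)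
        obtain ⟨y, hy, hyx, z, hz⟩ := hdeg w hwP hwv x hx u (ckE_symm hw)
        have hcK : (insert w K).card = K.card + 1 := Finset.card_insert_of_notMem hwK
        have hc : ckCert e N (r + 1) (insert w K) w (insert x S) := by
          refine ih (r + 1) _ _ _ (Finset.insert_subset hwP hK) (Finset.mem_insert_of_mem hv) hSE
            ?_ (Finset.mem_insert_self _ _) ⟨y, hy, ?_, z, hz⟩ (by omega) (by omega)
          · intro y hy a b hab
            rcases Finset.mem_insert.1 hy with rfl | hy
            · rcases ckE_unique hw hab with ⟨rfl, _⟩ | ⟨rfl, _⟩ <;> simp [hu]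
            · exact Finset.mem_insert_of_mem (hSK y hy a b hab)
          · intro hh
            rcases Finset.mem_insert.1 hh with hh | hh
            · exact hyx hh
            · exact hwK (hSK y hh w z hz)
        obtain ⟨t, ht, rfl⟩ := hw
        exact Or.inl ⟨x, hxS, t, ht, hc⟩

lemma ck_cert_of_B {n m : ℕ} (h₀ h₁ : Fin n → Fin m) (v : Fin m ⊕ Fin m) (j : ℕ)
    (hB : j + 1 ≤ cuckooB n m h₀ h₁ v) :
    ckCert (fun x => (h₀ x, h₁ x)) n (j + 1) {v} v ∅ := by
  set e : Fin n → Fin m × Fin m := fun x => (h₀ x, h₁ x) with he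
  set P : Finset (Fin m ⊕ Fin m) := Finset.univ.filter fun u => cuckooConn n m h₀ h₁ u v with hP
  set E : Finset (Fin n) :=
    Finset.univ.filter fun x => cuckooConn n m h₀ h₁ (Sum.inl (h₀ x)) v with hE
  have hPc : P.card = cuckooV n m h₀ h₁ v := by
    rw [cuckooV, Nat.card_eq_fintype_card, Fintype.card_subtype]
  have hEc : E.card = cuckooC n m h₀ h₁ v := by
    rw [cuckooC, Nat.card_eq_fintype_card, Fintype.card_subtype]
  have hconn : ∀ x, cuckooConn n m h₀ h₁ (Sum.inl (h₀ x)) (Sum.inr (h₁ x)) := fun x =>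
    Relation.EqvGen.rel _ _ ⟨x, rfl, rfl⟩
  have hor : ∀ u x w, ckE e u x w → (u = Sum.inl (h₀ x) ∧ w = Sum.inr (h₁ x)) ∨
      (u = Sum.inr (h₁ x) ∧ w = Sum.inl (h₀ x)) := fun u x w h => (ckE_iff e u x w).1 h
  have hor2 : ∀ u x w, ckE e u x w → cuckooConn n m h₀ h₁ u w := by
    intro u x w h
    rcases hor u x w h with ⟨rfl, rfl⟩ | ⟨rfl, rfl⟩
    · exact hconn x
    · exact (hconn x).symm
  have hor3 : ∀ u x w, ckE e u x w → (x ∈ E ↔ u ∈ P) := by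
    intro u x w h
    rcases hor u x w h with ⟨rfl, rfl⟩ | ⟨rfl, rfl⟩
    · simp [hE, hP]
    · simp only [hE, hP, Finset.mem_filter, Finset.mem_univ, true_and]
      exact ⟨fun hh => (hconn x).symm.trans _ _ _ hh, fun hh => (hconn x).trans _ _ _ hh⟩
  have hgood : ckGood e v P E := by
    refine ⟨?_, ?_, ?_⟩
    · exact Finset.mem_filter.2 ⟨Finset.mem_univ _, Relation.EqvGen.refl v⟩
    · intro x hx u w h
      exact (hor3 u x w h).1 hx
    · intro K hK hv hne
      by_contra hcon
      push Not at hcon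
      have hstep : ∀ u x w, ckE e u x w → u ∈ K → w ∈ K := by
        intro u x w h hu
        by_contra hw
        have hxE : x ∈ E := (hor3 u x w h).2 (hK hu)
        have hwP : w ∈ P := (hor3 w x u (ckE_symm h)).1 hxE
        exact hcon x hxE u hu w hwP hw h
      have hall : ∀ a b, cuckooConn n m h₀ h₁ a b → (a ∈ K ↔ b ∈ K) := by
        intro a b hab
        induction hab with
        | rel a b h =>
          obtain ⟨x, rfl, rfl⟩ := h
          have h1 : ckE e (Sum.inl (h₀ x)) x (Sum.inr (h₁ x)) := by simp [ckE_iff, he]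
          exact ⟨hstep _ _ _ h1, hstep _ _ _ (ckE_symm h1)⟩
        | refl => rfl
        | symm _ _ _ ih => exact ih.symm
        | trans _ _ _ _ _ ih1 ih2 => exact ih1.trans ih2
      apply hne
      refine Finset.Subset.antisymm hK fun p hp => ?_
      simp only [hP, Finset.mem_filter, Finset.mem_univ, true_and] at hp
      exact (hall p v hp).2 hv
  have hcard : P.card + j ≤ E.card := by
    rw [hPc, hEc]
    unfold cuckooB at hB
    omega
  obtain ⟨P', E', hg, hc, hdeg⟩ := ckGood_prune j P.card P E rfl hgood hcard
  have hPpos : 0 < P'.card := Finset.card_pos.2 ⟨v, hg.hv⟩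
  have hsub : ({v} : Finset (Fin m ⊕ Fin m)) ⊆ P' := by simpa using hg.hv
  obtain ⟨u, hu, hx⟩ := ck_next hg hsub (Finset.mem_singleton_self v)
    (S := ∅) (by simp) (by rw [Finset.card_empty]; omega)
  rw [Finset.mem_singleton] at hu
  subst hu
  have hEn : E'.card ≤ n := by simpa using Finset.card_le_univ E'
  exact ck_walk hg hdeg n (j + 1) {u} u ∅ hsub (Finset.mem_singleton_self u) (by simp) (by simp)
    (Finset.mem_singleton_self u) hx (by simp; omega) (by simpa using hEn)

lemma ck_pr_le {n m : ℕ} (hm : 0 < m) (v : Fin m ⊕ Fin m) (j : ℕ) (B : ℕ → ℕ → ℝ)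
    (hB0 : ∀ r k, 0 ≤ B r k) (hB1 : ∀ k, 1 ≤ B 0 k) (hmono : ∀ r, Monotone (B r))
    (hrec : ∀ r k, r + 1 ≤ j + 1 → (n : ℝ) / m * B (r + 1) (k + 1) +
      (n : ℝ) / (m * m) * (k * k) * B r k ≤ B (r + 1) k) :
    cuckooPr n m (fun ω => j + 1 ≤ cuckooB n m ω.1 ω.2 v) ≤ B (j + 1) 1 := by
  have hm' : (0 : ℝ) < m := by exact_mod_cast hm
  have φ : Fin n → Fin m × Fin m := fun _ => (⟨0, hm⟩, ⟨0, hm⟩)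
  have h1 := ck_count (n := n) hm (j + 1) B hB0 hB1 hmono hrec n (j + 1) {v} v ∅ φ le_rfl
  simp only [Finset.card_empty, Nat.sub_zero, Finset.card_singleton] at h1
  have h2 : Nat.card {ω : HashPair n m // j + 1 ≤ cuckooB n m ω.1 ω.2 v} ≤
      (ckSet n (j + 1) {v} v ∅ φ).card := by
    rw [Nat.card_eq_fintype_card, Fintype.card_subtype]
    refine Finset.card_le_card_of_injOn (fun ω x => (ω.1 x, ω.2 x)) ?_ ?_
    · intro ω hω
      have hω' : j + 1 ≤ cuckooB n m ω.1 ω.2 v := by simpa using hω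
      simp only [ckSet, Finset.coe_filter, Set.mem_ofPred_eq, Finset.mem_univ, true_and]
      exact ⟨by simp, ck_cert_of_B ω.1 ω.2 v j hω'⟩
    · intro a _ b _ hab
      refine Prod.ext ?_ ?_ <;> funext x
      · exact congrArg Prod.fst (congrFun hab x)
      · exact congrArg Prod.snd (congrFun hab x)
  have h3 : (Nat.card (HashPair n m) : ℝ) = ((m : ℝ) * m) ^ n := by
    simp [HashPair, mul_pow]
  unfold cuckooPr
  rw [h3, div_le_iff₀ (by positivity)]
  calc (Nat.card {ω : HashPair n m // j + 1 ≤ cuckooB n m ω.1 ω.2 v} : ℝ)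
      ≤ ((ckSet n (j + 1) {v} v ∅ φ).card : ℝ) := by exact_mod_cast h2
    _ ≤ _ := h1
    _ = _ := mul_comm _ _

lemma ck_analytic (ε : ℝ) (hε : 0 < ε) : ∃ Q : ℝ, 0 < Q ∧ ∀ m n : ℕ, 0 < m →
    (1 + ε) * n ≤ m → ∀ v : Fin m ⊕ Fin m, ∀ j : ℕ,
      cuckooPr n m (fun ω => j + 1 ≤ cuckooB n m ω.1 ω.2 v) ≤
        (Q * ((j + 1 : ℕ) : ℝ) ^ 2 / m) ^ (j + 1) := by
  obtain ⟨L, hL⟩ : ∃ L, L = Real.log (1 + ε) := ⟨_, rfl⟩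
  have hLpos : 0 < L := hL ▸ Real.log_pos (by linarith)
  have hexpL : Real.exp L = 1 + ε := by rw [hL, Real.exp_log (by linarith)]
  obtain ⟨s, hs⟩ : ∃ s, s = Real.exp (-(L / 2)) := ⟨_, rfl⟩
  have hs1 : s < 1 := by rw [hs, ← Real.exp_zero]; exact Real.exp_lt_exp.2 (by linarith)
  have hs0 : 0 < s := by rw [hs]; exact Real.exp_pos _
  have h1s : 0 < 1 - s := by linarith
  refine ⟨8 * Real.exp (L / 2) / (L ^ 2 * (1 - s)), by positivity, ?_⟩
  intro m n hm hnm v j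
  have hm' : (0 : ℝ) < m := by exact_mod_cast hm
  obtain ⟨R, hR⟩ : ∃ R : ℝ, R = ((j + 1 : ℕ) : ℝ) := ⟨_, rfl⟩
  have hR1 : 1 ≤ R := by rw [hR]; push_cast; linarith [Nat.cast_nonneg (α := ℝ) j]
  have hR0 : 0 < R := by linarith
  obtain ⟨δ, hδ⟩ : ∃ δ, δ = L / (2 * R) := ⟨_, rfl⟩
  have hδ0 : 0 < δ := by rw [hδ]; positivity
  have hδR : δ * R = L / 2 := by rw [hδ]; field_simp
  obtain ⟨A, hA⟩ : ∃ A, A = 2 / δ ^ 2 / (m * (1 - s)) := ⟨_, rfl⟩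
  have hA0 : 0 < A := by rw [hA]; positivity
  have hnmdiv : (n : ℝ) / m ≤ Real.exp (-L) := by
    rw [Real.exp_neg, hexpL, div_le_iff₀ hm', inv_mul_eq_div, le_div_iff₀ (by linarith)]
    linarith
  have hnm1 : (n : ℝ) / m ≤ 1 := hnmdiv.trans (by
    rw [Real.exp_le_one_iff]; linarith)
  have hk : ∀ k : ℕ, (k : ℝ) * k ≤ 2 / δ ^ 2 * Real.exp (δ * k) := by
    intro k
    have := Real.quadratic_le_exp_of_nonneg (x := δ * k) (by positivity)
    rw [div_mul_eq_mul_div, le_div_iff₀ (by positivity)]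
    have h0 : 0 ≤ δ * k := by positivity
    nlinarith
  have hfin := ck_pr_le (n := n) hm v j (fun r k => A ^ r * Real.exp (δ * r * k))
    (fun r k => by positivity) (fun k => by simp) (fun r a b hab => by
      have : (a : ℝ) ≤ b := by exact_mod_cast hab
      dsimp only
      gcongr) (by
      intro r k hr
      have hrR : ((r + 1 : ℕ) : ℝ) ≤ R := by rw [hR]; exact_mod_cast hr
      obtain ⟨X, hX⟩ : ∃ X, X = A ^ (r + 1) * Real.exp (δ * (r + 1 : ℕ) * k) := ⟨_, rfl⟩
      have hX0 : 0 < X := by rw [hX]; positivity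
      have t1 : (n : ℝ) / m * (A ^ (r + 1) * Real.exp (δ * (r + 1 : ℕ) * (k + 1 : ℕ))) ≤ s * X := by
        have e1 : Real.exp (δ * (r + 1 : ℕ) * (k + 1 : ℕ)) =
            Real.exp (δ * (r + 1 : ℕ) * k) * Real.exp (δ * (r + 1 : ℕ)) := by
          rw [← Real.exp_add]; congr 1; push_cast; ring
        have e2 : (n : ℝ) / m * Real.exp (δ * (r + 1 : ℕ)) ≤ s := by
          calc (n : ℝ) / m * Real.exp (δ * (r + 1 : ℕ)) ≤ Real.exp (-L) * Real.exp (L / 2) := by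
                refine mul_le_mul hnmdiv (Real.exp_le_exp.2 ?_) (Real.exp_pos _).le
                  (Real.exp_pos _).le
                rw [← hδR]; gcongr
            _ = s := by rw [← Real.exp_add, hs]; congr 1; ring
        calc _ = ((n : ℝ) / m * Real.exp (δ * (r + 1 : ℕ))) * X := by rw [e1, hX]; ring
          _ ≤ s * X := by gcongr
      have t2 : (n : ℝ) / (m * m) * (k * k) * (A ^ r * Real.exp (δ * r * k)) ≤ (1 - s) * X := by
        have e1 : Real.exp (δ * (r + 1 : ℕ) * k) = Real.exp (δ * r * k) * Real.exp (δ * k) := by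
          rw [← Real.exp_add]; congr 1; push_cast; ring
        have e2 : (n : ℝ) / (m * m) * (k * k) ≤ (1 - s) * A * Real.exp (δ * k) := by
          calc (n : ℝ) / (m * m) * (k * k) = ((n : ℝ) / m) * ((k * k) / m) := by field_simp
            _ ≤ 1 * ((2 / δ ^ 2 * Real.exp (δ * k)) / m) := by
                refine mul_le_mul hnm1 ?_ (by positivity) zero_le_one
                exact div_le_div_of_nonneg_right (hk k) hm'.le
            _ = (1 - s) * A * Real.exp (δ * k) := by rw [hA]; field_simp
        calc _ ≤ ((1 - s) * A * Real.exp (δ * k)) * (A ^ r * Real.exp (δ * r * k)) := by gcongr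
          _ = (1 - s) * X := by rw [hX, e1]; ring
      rw [← hX]
      linarith)
  refine hfin.trans ?_
  have e1 : δ * ((j + 1 : ℕ) : ℝ) * ((1 : ℕ) : ℝ) = L / 2 := by rw [← hR, ← hδR]; simp
  rw [e1, ← hR]
  have e2 : Real.exp (L / 2) ≤ Real.exp (L / 2) ^ (j + 1) :=
    le_self_pow₀ (Real.one_le_exp (by linarith)) (by omega)
  calc A ^ (j + 1) * Real.exp (L / 2) ≤ A ^ (j + 1) * Real.exp (L / 2) ^ (j + 1) := by gcongr
    _ = (A * Real.exp (L / 2)) ^ (j + 1) := by rw [mul_pow]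
    _ = _ := by
      congr 1
      rw [hA, hδ]
      field_simp
      norm_num

/-- If `(1+ε)·n ≤ m` then there are constants `α > 0` and `m₀` depending only on `ε` such
that for every vertex `v` and every `1 ≤ j ≤ m^{1/6}`,
`Pr(B_v ≥ j+1) ≤ m^{−1−α·j}`. -/
theorem cuckoo_cyclotomic_tail_bound (ε : ℝ) (hε : 0 < ε) :
    ∃ α : ℝ, 0 < α ∧ ∃ m₀ : ℕ, ∀ m n : ℕ, m₀ ≤ m → 1 ≤ n → (1 + ε) * n ≤ m →
      ∀ v : Fin m ⊕ Fin m, ∀ j : ℕ, 1 ≤ j → (j : ℝ) ≤ (m : ℝ) ^ ((1 : ℝ) / 6) →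
        cuckooPr n m (fun ω => j + 1 ≤ cuckooB n m ω.1 ω.2 v)
          ≤ (m : ℝ) ^ (-1 - α * j) := by
  obtain ⟨Q, hQ, hmain⟩ := ck_analytic ε hε
  refine ⟨1 / 6, by norm_num, max 1 ⌈(4 * Q) ^ (12 : ℕ)⌉₊, ?_⟩
  intro m n hm0 _ hnm v j hj hjm
  have hm1 : 1 ≤ m := (le_max_left _ _).trans hm0
  have hm1' : (1 : ℝ) ≤ m := by exact_mod_cast hm1
  have hm' : (0 : ℝ) < m := by linarith
  have hQm : (4 * Q) ^ (12 : ℕ) ≤ (m : ℝ) :=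
    (Nat.le_ceil _).trans (by exact_mod_cast (le_max_right _ _).trans hm0)
  have hQm' : 4 * Q ≤ (m : ℝ) ^ ((1 : ℝ) / 12) := by
    calc 4 * Q = ((4 * Q) ^ (12 : ℕ)) ^ ((1 : ℝ) / 12) := by
          rw [← Real.rpow_natCast, ← Real.rpow_mul (by positivity)]
          norm_num
      _ ≤ _ := Real.rpow_le_rpow (by positivity) hQm (by norm_num)
  refine (hmain m n hm1 hnm v j).trans ?_
  have hj' : (1 : ℝ) ≤ j := by exact_mod_cast hj
  have hR : ((j + 1 : ℕ) : ℝ) ^ 2 ≤ 4 * (m : ℝ) ^ ((1 : ℝ) / 3) := by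
    have h1 : ((j + 1 : ℕ) : ℝ) ≤ 2 * (m : ℝ) ^ ((1 : ℝ) / 6) := by push_cast; linarith
    calc ((j + 1 : ℕ) : ℝ) ^ 2 ≤ (2 * (m : ℝ) ^ ((1 : ℝ) / 6)) ^ 2 := by gcongr
      _ = 4 * ((m : ℝ) ^ ((1 : ℝ) / 6) * (m : ℝ) ^ ((1 : ℝ) / 6)) := by ring
      _ = _ := by rw [← Real.rpow_add hm']; norm_num
  have hbase : Q * ((j + 1 : ℕ) : ℝ) ^ 2 / m ≤ (m : ℝ) ^ (-(7 : ℝ) / 12) := by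
    calc Q * ((j + 1 : ℕ) : ℝ) ^ 2 / m ≤ Q * (4 * (m : ℝ) ^ ((1 : ℝ) / 3)) / m := by gcongr
      _ = (4 * Q) * (m : ℝ) ^ ((1 : ℝ) / 3) / m := by ring
      _ ≤ (m : ℝ) ^ ((1 : ℝ) / 12) * (m : ℝ) ^ ((1 : ℝ) / 3) / m := by gcongr
      _ = (m : ℝ) ^ (-(7 : ℝ) / 12) := by
        rw [← Real.rpow_add hm', ← Real.rpow_sub_one hm'.ne']
        norm_num
  calc (Q * ((j + 1 : ℕ) : ℝ) ^ 2 / m) ^ (j + 1) ≤ ((m : ℝ) ^ (-(7 : ℝ) / 12)) ^ (j + 1) := by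
        gcongr
    _ = (m : ℝ) ^ (-(7 : ℝ) / 12 * ((j + 1 : ℕ) : ℝ)) := by
        rw [← Real.rpow_natCast, ← Real.rpow_mul hm'.le]
    _ ≤ _ := by
        refine Real.rpow_le_rpow_of_exponent_le hm1' ?_
        push_cast
        linarith
end

section
/- There exist a constant c > 0 and a threshold m₀ such that the following holds for all m ≥ m₀. Let m' = ⌈m^{2/3}⌉ and let n' be a positive integer with n' ≤ 2·m^{1/3}. Then for every real s with 0 < s ≤ m^{1/6}, the random cuckoo graph with n' edges on parts of size m' satisfies: the probability that more than s vertices v have C(v) > 8 is at most m^{−c·√s}. -/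
open Classical

/-- hash value on side `b` -/
def cqH {n m : ℕ} (ω : HashPair n m) (b : Bool) (x : Fin n) : Fin m :=
  if b then ω.2 x else ω.1 x

/-- vertex on side `b` -/
def cqV {n m : ℕ} (ω : HashPair n m) (b : Bool) (x : Fin n) : Fin m ⊕ Fin m :=
  if b then Sum.inr (ω.2 x) else Sum.inl (ω.1 x)

lemma cqV_eq {n m : ℕ} (ω : HashPair n m) (b b' : Bool) (x y : Fin n)
    (h : cqV ω b x = cqV ω b' y) : b = b' ∧ cqH ω b x = cqH ω b y := by
  cases b <;> cases b' <;> simp_all [cqV, cqH]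

lemma cqV_eq_of {n m : ℕ} (ω : HashPair n m) (b : Bool) (x y : Fin n)
    (h : cqH ω b x = cqH ω b y) : cqV ω b x = cqV ω b y := by
  cases b <;> simp_all [cqV, cqH]

lemma cqV_conn {n m : ℕ} (ω : HashPair n m) (b : Bool) (x : Fin n) :
    cuckooConn n m ω.1 ω.2 (Sum.inl (ω.1 x)) (cqV ω b x) := by
  cases b
  · exact Relation.EqvGen.refl _
  · exact Relation.EqvGen.rel _ _ ⟨x, rfl, rfl⟩

/-- A set of edges closed under sharing endpoints: being an endpoint is invariant. -/
lemma cq_closed {n m : ℕ} (ω : HashPair n m) (L : Finset (Fin n))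
    (hL : ∀ x ∈ L, ∀ y b, cqH ω b y = cqH ω b x → y ∈ L) (u v : Fin m ⊕ Fin m)
    (h : cuckooConn n m ω.1 ω.2 u v) :
    (∃ x ∈ L, ∃ b, u = cqV ω b x) ↔ (∃ x ∈ L, ∃ b, v = cqV ω b x) := by
  induction h with
  | rel a c hac =>
    obtain ⟨y, ha, hc⟩ := hac
    have ha' : a = cqV ω false y := ha
    have hc' : c = cqV ω true y := hc
    constructor
    · rintro ⟨x, hx, b, hb⟩
      have := cqV_eq ω false b y x (ha' ▸ hb)
      exact ⟨y, hL x hx y _ this.2, true, hc'⟩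
    · rintro ⟨x, hx, b, hb⟩
      have := cqV_eq ω true b y x (hc' ▸ hb)
      exact ⟨y, hL x hx y _ this.2, false, ha'⟩
  | refl a => rfl
  | symm a b _ ih => exact ih.symm
  | trans a b c _ _ ih1 ih2 => exact ih1.trans ih2

lemma cqC_congr {n m : ℕ} (ω : HashPair n m) (u v : Fin m ⊕ Fin m)
    (h : cuckooConn n m ω.1 ω.2 u v) : cuckooC n m ω.1 ω.2 u = cuckooC n m ω.1 ω.2 v := by
  unfold cuckooC
  apply Nat.card_congr
  apply Equiv.subtypeEquivRight
  intro x
  exact ⟨fun h' => Relation.EqvGen.trans _ _ _ h' h,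
    fun h' => Relation.EqvGen.trans _ _ _ h' (Relation.EqvGen.symm _ _ h)⟩

/-- edges in big components -/
noncomputable def cqB {n m : ℕ} (ω : HashPair n m) : Finset (Fin n) :=
  Finset.univ.filter (fun x => 8 < cuckooC n m ω.1 ω.2 (Sum.inl (ω.1 x)))

/-- component of an edge -/
noncomputable def cqComp {n m : ℕ} (ω : HashPair n m) (x : Fin n) :
    Quotient (cuckooSetoid n m ω.1 ω.2) := Quotient.mk _ (Sum.inl (ω.1 x))

lemma cqComp_eq {n m : ℕ} (ω : HashPair n m) (x y : Fin n) :
    cqComp ω x = cqComp ω y ↔ cuckooConn n m ω.1 ω.2 (Sum.inl (ω.1 x)) (Sum.inl (ω.1 y)) := by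
  unfold cqComp
  rw [Quotient.eq]
  rfl

lemma cqComp_of_share {n m : ℕ} (ω : HashPair n m) (b : Bool) (x y : Fin n)
    (h : cqH ω b x = cqH ω b y) : cqComp ω x = cqComp ω y := by
  rw [cqComp_eq]
  have h1 := cqV_conn ω b x
  rw [cqV_eq_of ω b x y h] at h1
  exact Relation.EqvGen.trans _ _ _ h1 (Relation.EqvGen.symm _ _ (cqV_conn ω b y))

lemma cqB_of_comp {n m : ℕ} (ω : HashPair n m) (x y : Fin n)
    (h : cqComp ω x = cqComp ω y) (hx : x ∈ cqB ω) : y ∈ cqB ω := by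
  rw [cqComp_eq] at h
  simp only [cqB, Finset.mem_filter, Finset.mem_univ, true_and] at hx ⊢
  rwa [← cqC_congr ω _ _ h]

lemma cqC_card {n m : ℕ} (ω : HashPair n m) (x : Fin n) :
    cuckooC n m ω.1 ω.2 (Sum.inl (ω.1 x)) =
      (Finset.univ.filter (fun y => cqComp ω y = cqComp ω x)).card := by
  unfold cuckooC
  rw [Nat.card_eq_fintype_card, Fintype.card_subtype]
  congr 1
  ext y
  simp [cqComp_eq]

lemma cq_closed_card {n m : ℕ} (ω : HashPair n m) (L : Finset (Fin n)) (hLB : L ⊆ cqB ω)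
    (hL : ∀ x ∈ L, ∀ y b, cqH ω b y = cqH ω b x → y ∈ L) :
    9 * (L.image (cqComp ω)).card ≤ L.card := by
  rw [Finset.card_eq_sum_card_image (cqComp ω) L, mul_comm, ← smul_eq_mul]
  apply Finset.card_nsmul_le_sum
  intro c hc
  obtain ⟨x, hx, rfl⟩ := Finset.mem_image.1 hc
  have h1 := hLB hx
  simp only [cqB, Finset.mem_filter, Finset.mem_univ, true_and] at h1
  rw [cqC_card] at h1
  refine le_trans h1 (Finset.card_le_card ?_)
  intro y hy
  simp only [Finset.mem_filter, Finset.mem_univ, true_and] at hy ⊢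
  refine ⟨?_, hy⟩
  have h2 := (cqComp_eq ω y x).1 hy
  obtain ⟨z, hz, b, hb⟩ := (cq_closed ω L hL _ _ h2).2 ⟨x, hx, false, rfl⟩
  have h3 := cqV_eq ω false b y z hb
  exact hL z hz y _ h3.2

lemma cq_exists {n m : ℕ} [Nonempty (Fin n)] (ω : HashPair n m) (k : ℕ) (hk : k ≤ (cqB ω).card) :
    ∃ (x : ℕ → Fin n) (p : ℕ → Option (ℕ × Bool)),
      (∀ i < k, x i ∈ cqB ω) ∧ Set.InjOn x (Set.Iio k) ∧
      (∀ i < k, ∀ j b, p i = some (j, b) → j < i ∧ cqH ω b (x i) = cqH ω b (x j)) ∧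
      ((Finset.range k).filter (fun i => p i = none)).card ≤
        (((Finset.range k).image x).image (cqComp ω)).card ∧
      9 * (((Finset.range k).image x).image (cqComp ω)).card ≤ k + 8 := by
  induction k with
  | zero =>
    obtain ⟨a⟩ := ‹Nonempty (Fin n)›
    exact ⟨fun _ => a, fun _ => none, by simp, by simp [Set.InjOn], by simp, by simp, by simp⟩
  | succ k ih =>
    obtain ⟨x, p, hB, hinj, hp, hr, h9⟩ := ih (by omega)
    set L := (Finset.range k).image x with hLdef
    have hLcard : L.card = k := by
      rw [hLdef, Finset.card_image_of_injOn, Finset.card_range]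
      simpa using hinj
    have hLB : L ⊆ cqB ω := by
      intro y hy
      obtain ⟨i, hi, rfl⟩ := Finset.mem_image.1 hy
      exact hB i (Finset.mem_range.1 hi)
    -- general extension
    have key : ∀ (y : Fin n) (q : Option (ℕ × Bool)), y ∈ cqB ω → y ∉ L →
        (∀ j b, q = some (j, b) → j < k ∧ cqH ω b y = cqH ω b (x j)) →
        ∃ (x' : ℕ → Fin n) (p' : ℕ → Option (ℕ × Bool)),
          (∀ i < k + 1, x' i ∈ cqB ω) ∧ Set.InjOn x' (Set.Iio (k + 1)) ∧
          (∀ i < k + 1, ∀ j b, p' i = some (j, b) → j < i ∧ cqH ω b (x' i) = cqH ω b (x' j)) ∧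
          (Finset.range (k + 1)).image x' = insert y L ∧
          ((Finset.range (k + 1)).filter (fun i => p' i = none)).card ≤
            ((Finset.range k).filter (fun i => p i = none)).card + (if q = none then 1 else 0) := by
      intro y q hy hyL hq
      have hxk : ∀ i < k, Function.update x k y i = x i := fun i hi =>
        Function.update_of_ne (by omega) _ _
      have hpk : ∀ i < k, Function.update p k q i = p i := fun i hi =>
        Function.update_of_ne (by omega) _ _
      have hyx : ∀ i < k, x i ≠ y := fun i hi h =>
        hyL (Finset.mem_image.2 ⟨i, Finset.mem_range.2 hi, h⟩)
      refine ⟨Function.update x k y, Function.update p k q, ?_, ?_, ?_, ?_, ?_⟩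
      · intro i hi
        rcases Nat.lt_succ_iff_lt_or_eq.1 hi with h | rfl
        · rw [hxk i h]; exact hB i h
        · simpa using hy
      · intro i hi j hj hij
        simp only [Set.mem_Iio] at hi hj
        rcases Nat.lt_succ_iff_lt_or_eq.1 hi with h | rfl <;>
        rcases Nat.lt_succ_iff_lt_or_eq.1 hj with h' | rfl
        · rw [hxk i h, hxk j h'] at hij; exact hinj h h' hij
        · rw [hxk i h, Function.update_self] at hij; exact absurd hij (hyx i h)
        · rw [hxk j h', Function.update_self] at hij; exact absurd hij.symm (hyx j h')
        · rfl
      · intro i hi j b hpi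
        rcases Nat.lt_succ_iff_lt_or_eq.1 hi with h | rfl
        · rw [hpk i h] at hpi
          have := hp i h j b hpi
          rw [hxk i h, hxk j (by omega)]
          exact this
        · rw [Function.update_self] at hpi
          have := hq j b hpi
          rw [hxk j this.1, Function.update_self]
          exact this
      · rw [Finset.range_add_one, Finset.image_insert, Function.update_self]
        congr 1
        apply Finset.image_congr
        intro i hi
        exact hxk i (by simpa using hi)
      · rw [Finset.range_add_one, Finset.filter_insert, Function.update_self]
        have : (Finset.range k).filter (fun i => Function.update p k q i = none) =
            (Finset.range k).filter (fun i => p i = none) := by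
          apply Finset.filter_congr
          intro i hi
          rw [hpk i (by simpa using hi)]
        rw [this]
        split_ifs
        · exact Finset.card_insert_le _ _
        · simp
    by_cases hcl : ∀ x ∈ L, ∀ y b, cqH ω b y = cqH ω b x → y ∈ L
    · have h9' := cq_closed_card ω L hLB hcl
      obtain ⟨y, hy, hyL⟩ : ∃ y ∈ cqB ω, y ∉ L := by
        apply Finset.exists_mem_notMem_of_card_lt_card
        omega
      obtain ⟨x', p', h1, h2, h3, h4, h5⟩ := key y none hy hyL (by simp)
      refine ⟨x', p', h1, h2, h3, ?_, ?_⟩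
      · rw [h4, Finset.image_insert, Finset.card_insert_of_notMem]
        · simp only [if_true] at h5; omega
        · intro hmem
          obtain ⟨z, hz, hzy⟩ := Finset.mem_image.1 hmem
          have h2 := (cqComp_eq ω y z).1 hzy.symm
          obtain ⟨w, hw, b, hb⟩ := (cq_closed ω L hcl _ _ h2).2 ⟨z, hz, false, rfl⟩
          have h3 := cqV_eq ω false b y w hb
          exact hyL (hcl w hw y _ h3.2)
      · rw [h4, Finset.image_insert]
        have := Finset.card_insert_le (cqComp ω y) (L.image (cqComp ω))
        omega
    · push Not at hcl
      obtain ⟨z, hz, y, b, hyz, hyL⟩ := hcl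
      obtain ⟨i, hi, rfl⟩ := Finset.mem_image.1 hz
      have hc := cqComp_of_share ω b _ _ hyz
      obtain ⟨x', p', h1, h2, h3, h4, h5⟩ := key y (some (i, b))
        (cqB_of_comp ω _ _ hc.symm (hLB hz)) hyL (by
          intro j b' h
          simp only [Option.some.injEq, Prod.mk.injEq] at h
          obtain ⟨rfl, rfl⟩ := h
          exact ⟨Finset.mem_range.1 hi, hyz⟩)
      have himg : (insert y L).image (cqComp ω) = L.image (cqComp ω) := by
        rw [Finset.image_insert, Finset.insert_eq_of_mem]
        rw [hc]; exact Finset.mem_image_of_mem _ hz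
      refine ⟨x', p', h1, h2, h3, ?_, ?_⟩
      · rw [h4, himg]
        simp at h5
        omega
      · rw [h4, himg]; omega

/-- the event attached to a certificate -/
def cqEv {n m K : ℕ} (x : Fin K → Fin n) (p : Fin K → Option (Fin K × Bool))
    (ω : HashPair n m) : Prop :=
  ∀ i j b, p i = some (j, b) → j < i ∧ cqH ω b (x i) = cqH ω b (x j)

lemma cq_count {n m K : ℕ} (x : Fin K → Fin n) (hx : Function.Injective x)
    (p : Fin K → Option (Fin K × Bool)) (r : ℕ)
    (hr : (Finset.univ.filter (fun i => p i = none)).card ≤ r) :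
    (Finset.univ.filter (fun ω : HashPair n m => cqEv x p ω)).card * m ^ (K - r) ≤ m ^ (2 * n) := by
  rcases Nat.eq_zero_or_pos m with rfl | hm
  · rcases Nat.eq_zero_or_pos n with rfl | hn
    · have : K = 0 := by
        by_contra h
        exact (x ⟨0, by omega⟩).elim0
      subst this
      simp
      refine (Finset.card_filter_le _ _).trans ?_
      simp
    · have : IsEmpty (HashPair n 0) := ⟨fun ω => (ω.1 ⟨0, hn⟩).elim0⟩
      simp [Finset.univ_eq_empty]
  let f : Fin K → Fin n × Bool := fun i => (x i, ((p i).map Prod.snd).getD false)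
  let D : Finset (Fin n × Bool) := (Finset.univ.filter (fun i => p i ≠ none)).image f
  have hf : Function.Injective f := fun i j h => hx (congrArg Prod.fst h)
  have hD : K - r ≤ D.card := by
    rw [Finset.card_image_of_injective _ hf]
    have := Finset.card_filter_add_card_filter_not (s := (Finset.univ : Finset (Fin K)))
      (fun i => p i = none)
    simp only [Finset.card_univ, Fintype.card_fin] at this
    simp only [ne_eq]
    omega
  have hinj : (Finset.univ.filter (fun ω : HashPair n m => cqEv x p ω)).card ≤
      Fintype.card ({a // a ∉ D} → Fin m) := by
    rw [← Finset.card_univ]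
    apply Finset.card_le_card_of_injOn (fun ω a => cqH ω a.1.2 a.1.1)
    · intro _ _; simp
    · intro ω hω ω' hω' h
      simp only [Finset.coe_filter, Finset.mem_univ, true_and, Set.mem_setOf_eq] at hω hω'
      have hout : ∀ y b, (y, b) ∉ D → cqH ω b y = cqH ω' b y := by
        intro y b hyb
        exact congrFun h ⟨(y, b), hyb⟩
      have hin : ∀ N : ℕ, ∀ i : Fin K, i.1 < N → ∀ b, cqH ω b (x i) = cqH ω' b (x i) := by
        intro N
        induction N with
        | zero => intro i hi; omega
        | succ N ih =>
          intro i hi b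
          by_cases hD : (x i, b) ∈ D
          · obtain ⟨i', hi', hii⟩ := Finset.mem_image.1 hD
            have e1 : i' = i := hx (congrArg Prod.fst hii)
            subst e1
            have e2 : ((p i').map Prod.snd).getD false = b := congrArg Prod.snd hii
            simp only [Finset.mem_filter, Finset.mem_univ, true_and] at hi'
            obtain ⟨⟨j, b'⟩, hjb⟩ := Option.ne_none_iff_exists'.1 hi'
            rw [hjb] at e2
            simp at e2
            subst e2
            obtain ⟨hlt, g1⟩ := hω _ _ _ hjb
            obtain ⟨_, g2⟩ := hω' _ _ _ hjb
            rw [g1, g2]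
            exact ih j (by have : j.1 < i'.1 := hlt; omega) b'
          · exact hout _ _ hD
      have hall : ∀ y b, cqH ω b y = cqH ω' b y := by
        intro y b
        by_cases hD : (y, b) ∈ D
        · obtain ⟨i, _, hii⟩ := Finset.mem_image.1 hD
          have e1 : x i = y := congrArg Prod.fst hii
          rw [← e1]
          exact hin (i.1 + 1) i (by omega) b
        · exact hout _ _ hD
      ext y
      · have := hall y false
        simp [cqH] at this
        rw [this]
      · have := hall y true
        simp [cqH] at this
        rw [this]
  have hcard : Fintype.card {a // a ∉ D} + D.card = 2 * n := by
    rw [Fintype.card_subtype_compl]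
    simp only [Fintype.card_coe, Fintype.card_prod, Fintype.card_fin, Fintype.card_bool]
    have : D.card ≤ n * 2 := by
      have := Finset.card_le_univ D
      simpa using this
    omega
  calc _ ≤ Fintype.card ({a // a ∉ D} → Fin m) * m ^ (K - r) := Nat.mul_le_mul_right _ hinj
    _ ≤ m ^ (Fintype.card {a // a ∉ D}) * m ^ D.card := by
        rw [Fintype.card_fun, Fintype.card_fin]
        exact Nat.mul_le_mul_left _ (Nat.pow_le_pow_right hm hD)
    _ = m ^ (2 * n) := by rw [← pow_add, hcard]

lemma cq_union {n m K : ℕ} :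
    (Finset.univ.filter (fun ω : HashPair n m => K ≤ (cqB ω).card)).card * m ^ (K - (K + 8) / 9)
      ≤ (n * (2 * K + 1)) ^ K * m ^ (2 * n) := by
  let T : Finset ((Fin K → Fin n) × (Fin K → Option (Fin K × Bool))) :=
    Finset.univ.filter (fun t => Function.Injective t.1 ∧
      (Finset.univ.filter (fun i => t.2 i = none)).card ≤ (K + 8) / 9)
  have hsub : (Finset.univ.filter (fun ω : HashPair n m => K ≤ (cqB ω).card)) ⊆
      T.biUnion (fun t => Finset.univ.filter (fun ω : HashPair n m => cqEv t.1 t.2 ω)) := by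
    intro ω hω
    simp only [Finset.mem_filter, Finset.mem_univ, true_and] at hω
    rcases Nat.eq_zero_or_pos K with hK0 | hKpos
    · subst hK0
      rw [Finset.mem_biUnion]
      refine ⟨(Fin.elim0, Fin.elim0), ?_, ?_⟩
      · simp [T, Function.Injective]
      · simp [cqEv]
    have hne : Nonempty (Fin n) := by
      obtain ⟨y, _⟩ := Finset.card_pos.1 (lt_of_lt_of_le hKpos hω)
      exact ⟨y⟩
    obtain ⟨x, p, hB, hinj, hp, hr, h9⟩ := cq_exists ω K hω
    rw [Finset.mem_biUnion]
    let z : Fin K := ⟨0, hKpos⟩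
    let P : Fin K → Option (Fin K × Bool) := fun i =>
      (p i.1).map (fun a => (if h : a.1 < K then ⟨a.1, h⟩ else z, a.2))
    refine ⟨(fun i => x i.1, P), ?_, ?_⟩
    · simp only [T, Finset.mem_filter, Finset.mem_univ, true_and]
      constructor
      · intro i j hij
        exact Fin.ext (hinj i.2 j.2 hij)
      · have : (Finset.univ.filter (fun i => P i = none)).card ≤
            ((Finset.range K).filter (fun i => p i = none)).card := by
          apply Finset.card_le_card_of_injOn (fun i => i.1)
          · intro i hi
            simp only [P, Finset.coe_filter, Finset.mem_univ, true_and, Set.mem_setOf_eq,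
              Option.map_eq_none_iff, Finset.mem_range] at hi ⊢
            exact ⟨i.2, hi⟩
          · intro i _ j _ h
            exact Fin.ext h
        omega
    · simp only [Finset.mem_filter, Finset.mem_univ, true_and]
      intro i j b hP
      simp only [P, Option.map_eq_some_iff] at hP
      obtain ⟨⟨j', b'⟩, h1, h2⟩ := hP
      obtain ⟨hlt, heq⟩ := hp i.1 i.2 _ _ h1
      have hj' : j' < K := lt_trans hlt i.2
      simp only [hj', dif_pos, Prod.mk.injEq] at h2
      obtain ⟨rfl, rfl⟩ := h2
      exact ⟨hlt, heq⟩
  have hT : T.card ≤ (n * (2 * K + 1)) ^ K := by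
    refine (Finset.card_le_univ _).trans ?_
    simp only [Fintype.card_prod, Fintype.card_fun, Fintype.card_fin, Fintype.card_option,
      Fintype.card_bool]
    rw [mul_pow, mul_comm K 2]
  calc _ ≤ (∑ t ∈ T, (Finset.univ.filter (fun ω : HashPair n m => cqEv t.1 t.2 ω)).card)
        * m ^ (K - (K + 8) / 9) :=
        Nat.mul_le_mul_right _ ((Finset.card_le_card hsub).trans Finset.card_biUnion_le)
    _ ≤ ∑ t ∈ T, m ^ (2 * n) := by
        rw [Finset.sum_mul]
        apply Finset.sum_le_sum
        intro t ht
        simp only [T, Finset.mem_filter, Finset.mem_univ, true_and] at ht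
        exact cq_count t.1 ht.1 t.2 _ ht.2
    _ = T.card * m ^ (2 * n) := by simp
    _ ≤ _ := Nat.mul_le_mul_right _ hT

lemma cq_big {n m : ℕ} (ω : HashPair n m) :
    Nat.card {v : Fin m ⊕ Fin m // 8 < cuckooC n m ω.1 ω.2 v} ≤ 2 * (cqB ω).card ∧
    (0 < Nat.card {v : Fin m ⊕ Fin m // 8 < cuckooC n m ω.1 ω.2 v} → 9 ≤ (cqB ω).card) := by
  have hend : ∀ v, 8 < cuckooC n m ω.1 ω.2 v → ∃ y ∈ cqB ω, ∃ b, v = cqV ω b y := by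
    intro v hv
    have : 0 < cuckooC n m ω.1 ω.2 v := by omega
    unfold cuckooC at this
    obtain ⟨⟨⟨y, hy⟩⟩, _⟩ := Nat.card_pos_iff.1 this
    obtain ⟨z, _, b, hb⟩ := (cq_closed ω Finset.univ (by simp) _ _ hy).1 ⟨y, by simp, false, rfl⟩
    refine ⟨z, ?_, b, hb⟩
    simp only [cqB, Finset.mem_filter, Finset.mem_univ, true_and]
    rw [cqC_congr ω _ _ (cqV_conn ω b z), ← hb]
    exact hv
  constructor
  · rw [Nat.card_eq_fintype_card, Fintype.card_subtype]
    have : (Finset.univ.filter (fun v => 8 < cuckooC n m ω.1 ω.2 v)) ⊆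
        (cqB ω ×ˢ (Finset.univ : Finset Bool)).image (fun a => cqV ω a.2 a.1) := by
      intro v hv
      simp only [Finset.mem_filter, Finset.mem_univ, true_and] at hv
      obtain ⟨y, hy, b, hb⟩ := hend v hv
      exact Finset.mem_image.2 ⟨(y, b), by simp [hy], hb.symm⟩
    refine (Finset.card_le_card this).trans (Finset.card_image_le.trans ?_)
    simp [mul_comm]
  · intro h
    obtain ⟨⟨⟨v, hv⟩⟩, _⟩ := Nat.card_pos_iff.1 h
    obtain ⟨y, hy, _⟩ := hend v hv
    have hy' := hy
    simp only [cqB, Finset.mem_filter, Finset.mem_univ, true_and] at hy'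
    rw [cqC_card] at hy'
    refine le_trans hy' (Finset.card_le_card ?_)
    intro z hz
    simp only [Finset.mem_filter, Finset.mem_univ, true_and] at hz
    exact cqB_of_comp ω _ _ hz.symm hy

lemma cq_prob {n m K : ℕ} (hm : 0 < m) (s : ℝ) (hs : 0 < s) (hK : K = max 9 ⌈s / 2⌉₊) :
    cuckooPr n m (fun ω =>
      s < (Nat.card {v : Fin m ⊕ Fin m // 8 < cuckooC n m ω.1 ω.2 v} : ℝ)) *
      (m : ℝ) ^ (K - (K + 8) / 9) ≤ ((n : ℝ) * (2 * K + 1)) ^ K := by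
  have hU := cq_union (n := n) (m := m) (K := K)
  have hcard : Nat.card (HashPair n m) = m ^ (2 * n) := by
    rw [Nat.card_eq_fintype_card]
    simp only [HashPair, Fintype.card_prod, Fintype.card_fun, Fintype.card_fin]
    rw [← pow_add]; congr 1; ring
  have hle : Nat.card {ω : HashPair n m //
      s < (Nat.card {v : Fin m ⊕ Fin m // 8 < cuckooC n m ω.1 ω.2 v} : ℝ)} ≤
      (Finset.univ.filter (fun ω : HashPair n m => K ≤ (cqB ω).card)).card := by
    rw [Nat.card_eq_fintype_card, Fintype.card_subtype]
    apply Finset.card_le_card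
    intro ω hω
    simp only [Finset.mem_filter, Finset.mem_univ, true_and] at hω ⊢
    obtain ⟨h1, h2⟩ := cq_big ω
    rw [hK]
    apply max_le
    · apply h2
      exact_mod_cast hs.trans hω
    · apply Nat.ceil_le.2
      have : (Nat.card {v : Fin m ⊕ Fin m // 8 < cuckooC n m ω.1 ω.2 v} : ℝ) ≤
        2 * (cqB ω).card := by exact_mod_cast h1
      linarith
  have hfin := (Nat.mul_le_mul_right (m ^ (K - (K + 8) / 9)) hle).trans hU
  unfold cuckooPr
  rw [hcard, div_mul_eq_mul_div, div_le_iff₀ (by positivity)]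
  exact_mod_cast hfin

/-- Inner-queue bound: for the sparse inner cuckoo graph with `n' ≤ 2·m^{1/3}` edges on
parts of size `m' = ⌈m^{2/3}⌉`, for every real `0 < s ≤ m^{1/6}`, the probability that
more than `s` vertices lie in components with more than `8` edges is at most
`m^{−c·√s}`, for a universal constant `c > 0` and all large enough `m`. -/
theorem inner_queue_bound :
    ∃ c : ℝ, 0 < c ∧ ∃ m₀ : ℕ, ∀ m : ℕ, m₀ ≤ m →
      ∀ m' : ℕ, m' = ⌈(m : ℝ) ^ ((2 : ℝ) / 3)⌉₊ →
      ∀ n' : ℕ, 0 < n' → (n' : ℝ) ≤ 2 * (m : ℝ) ^ ((1 : ℝ) / 3) →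
      ∀ s : ℝ, 0 < s → s ≤ (m : ℝ) ^ ((1 : ℝ) / 6) →
        cuckooPr n' m' (fun ω =>
            s < (Nat.card {v : Fin m' ⊕ Fin m' // 8 < cuckooC n' m' ω.1 ω.2 v} : ℝ))
          ≤ (m : ℝ) ^ (-(c * Real.sqrt s)) := by
  refine ⟨1 / 108, by norm_num, 21 ^ 108, ?_⟩
  intro m hm m' hm' n' hn' hn s hs hsm
  have hmR : ((21 : ℝ)) ^ 108 ≤ (m : ℝ) := by exact_mod_cast hm
  have hm1 : (1 : ℝ) ≤ m := le_trans (one_le_pow₀ (by norm_num)) hmR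
  have hm0 : (0 : ℝ) ≤ m := by linarith
  obtain ⟨u, hu⟩ : ∃ u : ℝ, u = (m : ℝ) ^ ((1 : ℝ) / 108) := ⟨_, rfl⟩
  have hpow : ∀ k : ℕ, u ^ k = (m : ℝ) ^ ((k : ℝ) / 108) := by
    intro k
    rw [hu, ← Real.rpow_natCast, ← Real.rpow_mul hm0]
    congr 1; ring
  have hu21 : (21 : ℝ) ≤ u := by
    have h0 : (0 : ℝ) ≤ u := by rw [hu]; positivity
    refine le_of_pow_le_pow_left₀ (n := 108) (by norm_num) h0 ?_
    rw [hpow]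
    have : ((108 : ℕ) : ℝ) / 108 = 1 := by norm_num
    rw [this, Real.rpow_one]
    exact hmR
  have hu0 : (0 : ℝ) < u := by linarith
  have hu1 : (1 : ℝ) ≤ u := by linarith
  have e1 : (m : ℝ) ^ ((1 : ℝ) / 3) = u ^ 36 := by rw [hpow]; congr 1; norm_num
  have e2 : (m : ℝ) ^ ((2 : ℝ) / 3) = u ^ 72 := by rw [hpow]; congr 1; norm_num
  have e3 : (m : ℝ) ^ ((1 : ℝ) / 6) = u ^ 18 := by rw [hpow]; congr 1; norm_num
  rw [e1] at hn
  rw [e2] at hm'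
  rw [e3] at hsm
  have hM : u ^ 72 ≤ (m' : ℝ) := by rw [hm']; exact Nat.le_ceil _
  have hM0 : 0 < m' := by
    have : (0 : ℝ) < m' := lt_of_lt_of_le (by positivity) hM
    exact_mod_cast this
  obtain ⟨K, hK⟩ : ∃ K : ℕ, K = max 9 ⌈s / 2⌉₊ := ⟨_, rfl⟩
  have hP := cq_prob (n := n') hM0 s hs hK
  set Pr := cuckooPr n' m' (fun ω =>
            s < (Nat.card {v : Fin m' ⊕ Fin m' // 8 < cuckooC n' m' ω.1 ω.2 v} : ℝ)) with hPr
  have hPr0 : 0 ≤ Pr := by rw [hPr]; unfold cuckooPr; positivity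
  have hK9 : 9 ≤ K := by rw [hK]; exact le_max_left _ _
  have hKs : s / 2 ≤ (K : ℝ) := by
    refine (Nat.le_ceil _).trans ?_
    rw [hK]; exact_mod_cast le_max_right _ _
  have hKu : (K : ℝ) ≤ s / 2 + 9 := by
    rw [hK]
    push_cast
    apply max_le
    · linarith
    · have := Nat.ceil_lt_add_one (a := s / 2) (by positivity)
      linarith
  have h18 : u ≤ u ^ 18 := le_self_pow₀ hu1 (by norm_num)
  have h2K : 2 * (K : ℝ) + 1 ≤ 2 * u ^ 18 := by linarith
  have hprod : (n' : ℝ) * (2 * K + 1) ≤ u ^ 55 := by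
    calc (n' : ℝ) * (2 * K + 1) ≤ (2 * u ^ 36) * (2 * u ^ 18) := by gcongr
      _ = 4 * u ^ 54 := by ring
      _ ≤ u * u ^ 54 := by gcongr; linarith
      _ = u ^ 55 := by ring
  have hden : u ^ (56 * K) ≤ (m' : ℝ) ^ (K - (K + 8) / 9) := by
    calc u ^ (56 * K) ≤ u ^ (72 * (K - (K + 8) / 9)) := by
          apply pow_le_pow_right₀ hu1
          omega
      _ = (u ^ 72) ^ (K - (K + 8) / 9) := by rw [pow_mul]
      _ ≤ _ := by gcongr
  have hmain : Pr * u ^ (56 * K) ≤ u ^ (55 * K) := by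
    calc Pr * u ^ (56 * K) ≤ Pr * (m' : ℝ) ^ (K - (K + 8) / 9) := by gcongr
      _ ≤ _ := hP
      _ ≤ (u ^ 55) ^ K := by gcongr
      _ = _ := by rw [pow_mul]
  have hmain2 : Pr * u ^ K ≤ 1 := by
    have h : (Pr * u ^ K) * u ^ (55 * K) ≤ 1 * u ^ (55 * K) := by
      calc (Pr * u ^ K) * u ^ (55 * K) = Pr * u ^ (56 * K) := by
            rw [mul_assoc, ← pow_add]; congr 2; ring
        _ ≤ _ := by rw [one_mul]; exact hmain
    exact le_of_mul_le_mul_right h (by positivity)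
  have hsq : Real.sqrt s ≤ K := by
    rw [Real.sqrt_le_left (by positivity)]
    have : (9 : ℝ) ≤ K := by exact_mod_cast hK9
    nlinarith
  have hexp : (m : ℝ) ^ ((1 / 108) * Real.sqrt s) ≤ u ^ K := by
    rw [hpow]
    apply Real.rpow_le_rpow_of_exponent_le hm1
    linarith
  rw [Real.rpow_neg hm0, ← one_div, le_div_iff₀ (by positivity)]
  exact le_trans (by gcongr) hmain2
end

section
/- Fix a constant ε > 0. There exists a constant β ∈ (0,1), depending only on ε, such that for all positive integers n and m with (1+ε)·n ≤ m, every vertex v of the random cuckoo graph with n edges on parts of size m, and every natural number k ≥ 1, Pr(C(v) ≥ k) ≤ β^k. -/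
open Classical

namespace CuckooTail

open Finset

/-- Configurations taking values in `D` on `S` and equal to `g` off `S`. -/
noncomputable def Om {ι P : Type} [Fintype ι] (S : Finset ι) (D : Finset P) (g : ι → P) :
    Finset (ι → P) :=
  Fintype.piFinset (fun x => if x ∈ S then D else {g x})

lemma mem_Om {ι P : Type} [Fintype ι] (S : Finset ι) (D : Finset P) (g h : ι → P) :
    h ∈ Om S D g ↔ (∀ x ∈ S, h x ∈ D) ∧ ∀ x, x ∉ S → h x = g x := by
  unfold Om
  rw [Fintype.mem_piFinset]
  constructor
  · intro H
    refine ⟨fun x hx => by simpa [hx] using H x, fun x hx => by simpa [hx] using H x⟩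
  · rintro ⟨H1, H2⟩ x
    by_cases hx : x ∈ S
    · simpa [hx] using H1 x hx
    · simpa [hx] using H2 x hx

lemma card_Om {ι P : Type} [Fintype ι] (S : Finset ι) (D : Finset P) (g : ι → P) :
    (Om S D g).card = D.card ^ S.card := by
  unfold Om
  rw [Fintype.card_piFinset]
  have : ∀ x, (if x ∈ S then D else {g x}).card = if x ∈ S then D.card else 1 := by
    intro x; split_ifs <;> simp
  simp_rw [this]
  rw [Finset.prod_ite_mem]
  simp

lemma sum_Om_split {ι P : Type} [Fintype ι] [DecidableEq ι] (S : Finset ι) (D : Finset P) (g : ι → P)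
    (q : P → Prop) (f : (ι → P) → ℝ) :
    ∑ h ∈ Om S D g, f h = ∑ T ∈ S.powerset, ∑ g' ∈ Om T (D.filter q) g,
      ∑ h ∈ Om (S \ T) (D.filter (fun p => ¬ q p)) g', f h := by
  symm
  simp_rw [Finset.sum_sigma']
  refine Finset.sum_bij' (fun a _ => a.2.2)
    (fun h _ => ⟨S.filter (fun x => q (h x)), fun x => if x ∈ S ∧ q (h x) then h x else g x, h⟩)
    ?_ ?_ ?_ ?_ ?_
  · rintro ⟨T, g', h⟩ H
    simp only [mem_sigma, mem_powerset, mem_Om, mem_filter, mem_sdiff] at H ⊢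
    obtain ⟨hT, ⟨h1, h2⟩, h3, h4⟩ := H
    constructor
    · intro x hx
      by_cases hxT : x ∈ T
      · rw [h4 x (by tauto)]; exact (h1 x hxT).1
      · exact (h3 x ⟨hx, hxT⟩).1
    · intro x hx
      rw [h4 x (by tauto), h2 x (fun h => hx (hT h))]
  · intro h H
    simp only [mem_sigma, mem_powerset, mem_Om, mem_filter, mem_sdiff] at H ⊢
    obtain ⟨h1, h2⟩ := H
    refine ⟨filter_subset _ _, ⟨?_, ?_⟩, ?_, ?_⟩
    · intro x hx; rw [if_pos hx]; exact ⟨h1 x hx.1, hx.2⟩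
    · intro x hx; rw [if_neg hx]
    · intro x hx; exact ⟨h1 x hx.1, fun hq => hx.2 ⟨hx.1, hq⟩⟩
    · intro x hx
      by_cases hc : x ∈ S ∧ q (h x)
      · rw [if_pos hc]
      · rw [if_neg hc]; exact h2 x (by tauto)
  · rintro ⟨T, g', h⟩ H
    simp only [mem_sigma, mem_powerset, mem_Om, mem_filter, mem_sdiff] at H
    obtain ⟨hT, ⟨h1, h2⟩, h3, h4⟩ := H
    have key : ∀ x, (x ∈ S ∧ q (h x)) ↔ x ∈ T := by
      intro x
      constructor
      · rintro ⟨hx, hq⟩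
        by_contra hxT
        exact (h3 x ⟨hx, hxT⟩).2 hq
      · intro hx
        refine ⟨hT hx, ?_⟩
        rw [h4 x (by tauto)]; exact (h1 x hx).2
    have e1 : S.filter (fun x => q (h x)) = T := by
      ext x; rw [mem_filter]; exact key x
    have e2 : (fun x => if x ∈ S ∧ q (h x) then h x else g x) = g' := by
      funext x
      by_cases hx : x ∈ T
      · rw [if_pos ((key x).2 hx), h4 x (by tauto)]
      · rw [if_neg (fun hc => hx ((key x).1 hc)), h2 x hx]
    simp only [e1, e2]
  · intro h H; rfl
  · intro a H; rfl

variable {n m : ℕ}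

/-- Incidence of the vertex `u` with the edge `p`. -/
def inc (u : Fin m ⊕ Fin m) (p : Fin m × Fin m) : Prop := u = Sum.inl p.1 ∨ u = Sum.inr p.2

/-- The other endpoint. -/
noncomputable def oth (u : Fin m ⊕ Fin m) (p : Fin m × Fin m) : Fin m ⊕ Fin m :=
  if u = Sum.inl p.1 then Sum.inr p.2 else Sum.inl p.1

/-- Edges avoiding the explored vertices `X`. -/
noncomputable def Dom (X : Finset (Fin m ⊕ Fin m)) : Finset (Fin m × Fin m) :=
  univ.filter (fun p => Sum.inl p.1 ∉ X ∧ Sum.inr p.2 ∉ X)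

lemma Dom_insert (u : Fin m ⊕ Fin m) (X : Finset (Fin m ⊕ Fin m)) :
    Dom (insert u X) = (Dom X).filter (fun p => ¬ inc u p) := by
  ext p
  simp only [Dom, inc, mem_filter, mem_univ, true_and, mem_insert, not_or]
  constructor
  · rintro ⟨⟨a, b⟩, c, d⟩; exact ⟨⟨b, d⟩, fun h => a h.symm, fun h => c h.symm⟩
  · rintro ⟨⟨b, d⟩, a, c⟩; exact ⟨⟨fun h => a h.symm, b⟩, fun h => c h.symm, d⟩

/-- Vertices reachable from `A` through the items in `S`. -/
inductive Reach (S : Finset (Fin n)) (h : Fin n → Fin m × Fin m) (A : Finset (Fin m ⊕ Fin m)) :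
    Fin m ⊕ Fin m → Prop
  | base (v : Fin m ⊕ Fin m) (hv : v ∈ A) : Reach S h A v
  | right (x : Fin n) (hx : x ∈ S) (hr : Reach S h A (Sum.inl (h x).1)) :
      Reach S h A (Sum.inr (h x).2)
  | left (x : Fin n) (hx : x ∈ S) (hr : Reach S h A (Sum.inr (h x).2)) :
      Reach S h A (Sum.inl (h x).1)

/-- Number of reached items. -/
noncomputable def cnt (S : Finset (Fin n)) (h : Fin n → Fin m × Fin m)
    (A : Finset (Fin m ⊕ Fin m)) : ℕ :=
  (S.filter (fun x => Reach S h A (Sum.inl (h x).1))).card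

lemma reach_step (S T : Finset (Fin n)) (h : Fin n → Fin m × Fin m)
    (A : Finset (Fin m ⊕ Fin m)) (u : Fin m ⊕ Fin m)
    (hT : ∀ x ∈ T, inc u (h x)) (hT' : ∀ x ∈ S \ T, ¬ inc u (h x))
    (w : Fin m ⊕ Fin m) (hw : Reach S h A w) :
    w = u ∨ Reach (S \ T) h (A.erase u ∪ T.image (fun x => oth u (h x))) w := by
  induction hw with
  | base v hv =>
    by_cases hvu : v = u
    · exact Or.inl hvu
    · right; apply Reach.base; simp [hvu, hv]
  | right x hx hr ih =>
    by_cases hxT : x ∈ T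
    · by_cases hu : Sum.inr (h x).2 = u
      · exact Or.inl hu
      · right
        apply Reach.base
        refine mem_union_right _ (mem_image.2 ⟨x, hxT, ?_⟩)
        rcases hT x hxT with h1 | h1
        · simp [oth, h1]
        · exact absurd h1.symm hu
    · have := hT' x (mem_sdiff.2 ⟨hx, hxT⟩)
      rcases ih with ih | ih
      · exact absurd (Or.inl ih.symm) this
      · exact Or.inr (Reach.right x (mem_sdiff.2 ⟨hx, hxT⟩) ih)
  | left x hx hr ih =>
    by_cases hxT : x ∈ T
    · by_cases hu : Sum.inl (h x).1 = u
      · exact Or.inl hu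
      · right
        apply Reach.base
        refine mem_union_right _ (mem_image.2 ⟨x, hxT, ?_⟩)
        have : ¬ u = Sum.inl (h x).1 := fun h => hu h.symm
        simp [oth, this]
    · have := hT' x (mem_sdiff.2 ⟨hx, hxT⟩)
      rcases ih with ih | ih
      · exact absurd (Or.inr ih.symm) this
      · exact Or.inr (Reach.left x (mem_sdiff.2 ⟨hx, hxT⟩) ih)

lemma cnt_step (S T : Finset (Fin n)) (h : Fin n → Fin m × Fin m)
    (A : Finset (Fin m ⊕ Fin m)) (u : Fin m ⊕ Fin m)
    (hT : ∀ x ∈ T, inc u (h x)) (hT' : ∀ x ∈ S \ T, ¬ inc u (h x)) :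
    cnt S h A ≤ T.card + cnt (S \ T) h (A.erase u ∪ T.image (fun x => oth u (h x))) := by
  unfold cnt
  refine le_trans (card_le_card ?_) (card_union_le _ _)
  intro x hx
  rw [mem_filter] at hx
  by_cases hxT : x ∈ T
  · exact mem_union_left _ hxT
  · refine mem_union_right _ (mem_filter.2 ⟨mem_sdiff.2 ⟨hx.1, hxT⟩, ?_⟩)
    rcases reach_step S T h A u hT hT' _ hx.2 with h1 | h1
    · exact absurd (Or.inl h1.symm) (hT' x (mem_sdiff.2 ⟨hx.1, hxT⟩))
    · exact h1

lemma reach_empty (S : Finset (Fin n)) (h : Fin n → Fin m × Fin m) (w : Fin m ⊕ Fin m)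
    (hw : Reach S h ∅ w) : False := by
  induction hw with
  | base v hv => simp at hv
  | right x hx hr ih => exact ih
  | left x hx hr ih => exact ih

lemma card_bound (lam : ℝ) (h0 : 0 < lam) (h1 : lam ≤ 1) (hnm : (n : ℝ) ≤ lam * m)
    (X : Finset (Fin m ⊕ Fin m)) (u : Fin m ⊕ Fin m) (s : ℕ) (hs : s + X.card ≤ n) :
    (s : ℝ) * (((Dom X).filter (inc u)).card : ℝ) ≤ lam * ((Dom X).card : ℝ) := by
  set L : Finset (Fin m) := univ.filter (fun a => (Sum.inl a : Fin m ⊕ Fin m) ∉ X) with hL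
  set R : Finset (Fin m) := univ.filter (fun a => (Sum.inr a : Fin m ⊕ Fin m) ∉ X) with hR
  have hD : Dom X = L ×ˢ R := by
    ext p; simp [Dom, hL, hR]
  have hLc : m ≤ L.card + X.card := by
    have h2 : (univ.filter (fun a => (Sum.inl a : Fin m ⊕ Fin m) ∈ X)).card ≤ X.card := by
      apply card_le_card_of_injOn (fun a => (Sum.inl a : Fin m ⊕ Fin m))
      · intro a ha; simpa using ha
      · intro a _ b _ hab; simpa using hab
    have h3 := card_filter_add_card_filter_not (s := (univ : Finset (Fin m)))
      (fun a => (Sum.inl a : Fin m ⊕ Fin m) ∈ X)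
    simp only [card_univ, Fintype.card_fin] at h3
    have h4 : L.card = (univ.filter (fun a => ¬ (Sum.inl a : Fin m ⊕ Fin m) ∈ X)).card := by
      rw [hL]
    have h5 : (univ.filter (fun a => ¬ (Sum.inl a : Fin m ⊕ Fin m) ∈ X)).card
        + (univ.filter (fun a => (Sum.inl a : Fin m ⊕ Fin m) ∈ X)).card = m := by
      rw [add_comm]; convert h3
    omega
  have hRc : m ≤ R.card + X.card := by
    have h2 : (univ.filter (fun a => (Sum.inr a : Fin m ⊕ Fin m) ∈ X)).card ≤ X.card := by
      apply card_le_card_of_injOn (fun a => (Sum.inr a : Fin m ⊕ Fin m))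
      · intro a ha; simpa using ha
      · intro a _ b _ hab; simpa using hab
    have h3 := card_filter_add_card_filter_not (s := (univ : Finset (Fin m)))
      (fun a => (Sum.inr a : Fin m ⊕ Fin m) ∈ X)
    simp only [card_univ, Fintype.card_fin] at h3
    have h4 : R.card = (univ.filter (fun a => ¬ (Sum.inr a : Fin m ⊕ Fin m) ∈ X)).card := by
      rw [hR]
    have h5 : (univ.filter (fun a => ¬ (Sum.inr a : Fin m ⊕ Fin m) ∈ X)).card
        + (univ.filter (fun a => (Sum.inr a : Fin m ⊕ Fin m) ∈ X)).card = m := by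
      rw [add_comm]; convert h3
    omega
  have gen : ∀ l : ℕ, m ≤ l + X.card → (s : ℝ) ≤ lam * l := by
    intro l hl
    have a1 : (m : ℝ) ≤ l + X.card := by exact_mod_cast hl
    have a2 : (s : ℝ) + X.card ≤ n := by exact_mod_cast hs
    have a3 : (0 : ℝ) ≤ X.card := Nat.cast_nonneg _
    nlinarith
  rw [hD, card_product]
  push_cast
  rcases u with a | b
  · have : ((L ×ˢ R).filter (inc (Sum.inl a))).card ≤ R.card := by
      apply card_le_card_of_injOn (fun p => p.2)
      · intro p hp
        simp only [coe_filter, mem_product, Set.mem_ofPred_eq] at hp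
        exact hp.1.2
      · intro p hp q hq hpq
        simp [inc] at hp hq
        exact Prod.ext (hp.2.symm.trans hq.2) hpq
    have t1 : (((L ×ˢ R).filter (inc (Sum.inl a))).card : ℝ) ≤ R.card := by exact_mod_cast this
    calc _ ≤ (lam * L.card) * R.card := by
          apply mul_le_mul (gen _ hLc) t1 (by positivity) (by positivity)
      _ = _ := by ring
  · have : ((L ×ˢ R).filter (inc (Sum.inr b))).card ≤ L.card := by
      apply card_le_card_of_injOn (fun p => p.1)
      · intro p hp
        simp only [coe_filter, mem_product, Set.mem_ofPred_eq] at hp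
        exact hp.1.1
      · intro p hp q hq hpq
        simp [inc] at hp hq
        exact Prod.ext hpq (hp.2.symm.trans hq.2)
    have t1 : (((L ×ˢ R).filter (inc (Sum.inr b))).card : ℝ) ≤ L.card := by exact_mod_cast this
    calc _ ≤ (lam * R.card) * L.card := by
          apply mul_le_mul (gen _ hRc) t1 (by positivity) (by positivity)
      _ = _ := by ring

lemma pow_bound (lam z rho : ℝ) (hz : 1 ≤ z) (hr : 1 ≤ rho)
    (hlog : lam * (z * rho - 1) ≤ Real.log rho) (e f s : ℕ)
    (hse : (s : ℝ) * e ≤ lam * (e + f : ℝ)) :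
    (z * rho * e + f) ^ s ≤ rho * ((e : ℝ) + f) ^ s := by
  have hzr : 1 ≤ z * rho := one_le_mul_of_one_le_of_one_le hz hr
  rcases Nat.eq_zero_or_pos (e + f) with h | h
  · have he : e = 0 := by omega
    have hf : f = 0 := by omega
    subst he hf
    simp only [Nat.cast_zero, mul_zero, add_zero]
    exact le_mul_of_one_le_left (by positivity) hr
  · have hd : (0 : ℝ) < e + f := by exact_mod_cast h
    set d : ℝ := e + f with hdd
    have h1 : z * rho * e + f = d * (1 + e / d * (z * rho - 1)) := by
      field_simp; rw [hdd]; ring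
    have h2 : 0 ≤ e / d * (z * rho - 1) := mul_nonneg (by positivity) (by linarith)
    rw [h1, mul_pow, mul_comm rho]
    apply mul_le_mul_of_nonneg_left _ (by positivity)
    calc (1 + e / d * (z * rho - 1)) ^ s ≤ (Real.exp (e / d * (z * rho - 1))) ^ s := by
          apply pow_le_pow_left₀ (by linarith)
          rw [add_comm]; exact Real.add_one_le_exp _
      _ = Real.exp (s * (e / d * (z * rho - 1))) := by rw [Real.exp_nat_mul]
      _ ≤ Real.exp (Real.log rho) := by
          apply Real.exp_le_exp.2
          refine le_trans ?_ hlog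
          rw [← mul_assoc]
          apply mul_le_mul_of_nonneg_right _ (by linarith)
          rw [← mul_div_assoc, div_le_iff₀ hd]; exact hse
      _ = rho := Real.exp_log (by linarith)

theorem main_bound (lam z rho : ℝ) (h0 : 0 < lam) (h1 : lam ≤ 1) (hnm : (n : ℝ) ≤ lam * m)
    (hz : 1 ≤ z) (hr : 1 ≤ rho) (hlog : lam * (z * rho - 1) ≤ Real.log rho) (N : ℕ) :
    ∀ (S : Finset (Fin n)) (A X : Finset (Fin m ⊕ Fin m)) (g : Fin n → Fin m × Fin m),
      S.card + A.card ≤ N → S.card + A.card + X.card ≤ n + 1 →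
      ∑ h ∈ Om S (Dom X) g, z ^ cnt S h A ≤ rho ^ A.card * ((Dom X).card : ℝ) ^ S.card := by
  induction N with
  | zero =>
    intro S A X g hN _
    have hS : S = ∅ := by rw [← card_eq_zero]; omega
    have hA : A = ∅ := by rw [← card_eq_zero]; omega
    subst hS hA
    simp [cnt, card_Om]
  | succ N ih =>
    intro S A X g hN hX
    rcases A.eq_empty_or_nonempty with hA | ⟨u, hu⟩
    · subst hA
      have : ∀ h : Fin n → Fin m × Fin m, cnt S h ∅ = 0 := by
        intro h
        unfold cnt
        rw [card_eq_zero, filter_eq_empty_iff]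
        intro x _ hx
        exact reach_empty _ _ _ hx
      simp [this, card_Om]
    · have hApos : 0 < A.card := card_pos.2 ⟨u, hu⟩
      rw [sum_Om_split S (Dom X) g (inc u)]
      set e := ((Dom X).filter (inc u)).card with he
      set f := ((Dom X).filter (fun p => ¬ inc u p)).card with hf
      have hef : e + f = (Dom X).card := card_filter_add_card_filter_not _
      have hd : ((Dom X).card : ℝ) = e + f := by rw [← hef]; push_cast; rfl
      have inner : ∀ T ∈ S.powerset, ∀ g' ∈ Om T ((Dom X).filter (inc u)) g,
          ∑ h ∈ Om (S \ T) ((Dom X).filter (fun p => ¬ inc u p)) g', z ^ cnt S h A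
            ≤ z ^ T.card * (rho ^ (A.card - 1 + T.card) * (f : ℝ) ^ (S.card - T.card)) := by
        intro T hT g' hg'
        rw [mem_powerset] at hT
        rw [mem_Om] at hg'
        set A' := A.erase u ∪ T.image (fun x => oth u (g' x)) with hA'
        have hTc := card_le_card hT
        have hSTc : (S \ T).card = S.card - T.card := card_sdiff_of_subset hT
        have hA'c : A'.card ≤ A.card - 1 + T.card := by
          refine (card_union_le _ _).trans ?_
          rw [card_erase_of_mem hu]
          exact Nat.add_le_add_left card_image_le _
        have hXc : (insert u X).card ≤ X.card + 1 := card_insert_le _ _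
        have IH := ih (S \ T) A' (insert u X) g' (by omega) (by omega)
        rw [Dom_insert, ← hf, hSTc] at IH
        calc _ ≤ ∑ h ∈ Om (S \ T) ((Dom X).filter (fun p => ¬ inc u p)) g',
              z ^ T.card * z ^ cnt (S \ T) h A' := by
              apply sum_le_sum
              intro h hh
              rw [mem_Om] at hh
              rw [← pow_add]
              apply pow_le_pow_right₀ hz
              have hagree : ∀ x ∈ T, h x = g' x := fun x hx => hh.2 x (by simp [hx])
              have := cnt_step S T h A u
                (fun x hx => by
                  rw [hagree x hx]; exact (mem_filter.1 (hg'.1 x hx)).2)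
                (fun x hx => (mem_filter.1 (hh.1 x hx)).2)
              have himg : T.image (fun x => oth u (h x)) = T.image (fun x => oth u (g' x)) :=
                image_congr (fun x hx => by
                  show oth u (h x) = oth u (g' x)
                  rw [hagree x hx])
              rw [himg] at this
              exact this
          _ = z ^ T.card * ∑ h ∈ Om (S \ T) ((Dom X).filter (fun p => ¬ inc u p)) g',
              z ^ cnt (S \ T) h A' := by rw [mul_sum]
          _ ≤ z ^ T.card * (rho ^ A'.card * (f : ℝ) ^ (S.card - T.card)) := by
              apply mul_le_mul_of_nonneg_left IH (by positivity)
          _ ≤ _ := by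
              apply mul_le_mul_of_nonneg_left _ (by positivity)
              apply mul_le_mul_of_nonneg_right _ (by positivity)
              exact pow_le_pow_right₀ hr hA'c
      have hfin : rho ^ (A.card - 1) * (z * rho * e + f) ^ S.card
          ≤ rho ^ A.card * ((Dom X).card : ℝ) ^ S.card := by
        have hA1 : A.card = A.card - 1 + 1 := by omega
        have hse : (S.card : ℝ) * e ≤ lam * ((e : ℝ) + f) := by
          rw [← hd]
          exact card_bound lam h0 h1 hnm X u S.card (by omega)
        have hpb := pow_bound lam z rho hz hr hlog e f S.card hse
        have hA2 : rho ^ A.card = rho ^ (A.card - 1) * rho := by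
          rw [← pow_succ, ← hA1]
        rw [hA2, hd, mul_assoc (rho ^ (A.card - 1)) rho]
        exact mul_le_mul_of_nonneg_left hpb (by positivity)
      have hmid : ∀ T : Finset (Fin n), ∑ g' ∈ Om T ((Dom X).filter (inc u)) g,
              z ^ T.card * (rho ^ (A.card - 1 + T.card) * (f : ℝ) ^ (S.card - T.card))
            = rho ^ (A.card - 1) *
              ((z * rho * e) ^ T.card * (f : ℝ) ^ (S.card - T.card)) := by
        intro T
        rw [sum_const, card_Om, ← he, nsmul_eq_mul]
        push_cast
        rw [mul_pow, mul_pow, pow_add]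
        ring
      refine le_trans (sum_le_sum
        (fun T hT => sum_le_sum (fun g' hg' => inner T hT g' hg'))) ?_
      rw [sum_congr rfl (fun T _ => hmid T), ← mul_sum, sum_pow_mul_eq_add_pow]
      exact hfin

lemma conn_reach (h₀ h₁ : Fin n → Fin m) (A : Finset (Fin m ⊕ Fin m)) (a b : Fin m ⊕ Fin m)
    (hab : cuckooConn n m h₀ h₁ a b) :
    Reach univ (fun x => (h₀ x, h₁ x)) A a ↔ Reach univ (fun x => (h₀ x, h₁ x)) A b := by
  unfold cuckooConn at hab
  induction hab with
  | rel a b h =>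
    obtain ⟨x, rfl, rfl⟩ := h
    exact ⟨fun h => Reach.right (h := fun x => (h₀ x, h₁ x)) x (mem_univ _) h,
      fun h => Reach.left (h := fun x => (h₀ x, h₁ x)) x (mem_univ _) h⟩
  | refl a => rfl
  | symm a b _ ih => exact ih.symm
  | trans a b c _ _ ih1 ih2 => exact ih1.trans ih2

lemma C_le_cnt (h₀ h₁ : Fin n → Fin m) (v : Fin m ⊕ Fin m) :
    cuckooC n m h₀ h₁ v ≤ cnt univ (fun x => (h₀ x, h₁ x)) {v} := by
  unfold cuckooC cnt
  rw [Nat.card_eq_fintype_card, Fintype.card_subtype]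
  apply card_le_card
  intro x hx
  rw [mem_filter] at hx ⊢
  exact ⟨hx.1, (conn_reach h₀ h₁ {v} _ _ hx.2).2 (Reach.base _ (mem_singleton_self v))⟩

/-- The event as a set of configurations. -/
noncomputable def Ev (n m : ℕ) (v : Fin m ⊕ Fin m) (k : ℕ) : Finset (Fin n → Fin m × Fin m) :=
  univ.filter (fun h => k ≤ cnt univ h {v})

lemma Pr_le (v : Fin m ⊕ Fin m) (k : ℕ) :
    cuckooPr n m (fun ω => k ≤ cuckooC n m ω.1 ω.2 v)
      ≤ ((Ev n m v k).card : ℝ) / ((m : ℝ) * m) ^ n := by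
  unfold cuckooPr
  have h1 : (Nat.card (HashPair n m) : ℝ) = ((m : ℝ) * m) ^ n := by
    simp [HashPair, mul_pow]
  rw [h1]
  apply div_le_div_of_nonneg_right _ (by positivity)
  have : Nat.card {ω : HashPair n m // k ≤ cuckooC n m ω.1 ω.2 v} ≤ (Ev n m v k).card := by
    rw [Nat.card_eq_fintype_card, Fintype.card_subtype]
    apply card_le_card_of_injOn (fun ω x => (ω.1 x, ω.2 x))
    · intro ω hω
      simp only [coe_filter, mem_univ, true_and, Set.mem_ofPred_eq, Ev] at hω ⊢
      exact hω.trans (C_le_cnt _ _ _)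
    · intro ω _ ω' _ heq
      refine Prod.ext (funext fun x => ?_) (funext fun x => ?_)
      · exact congrArg Prod.fst (congrFun heq x)
      · exact congrArg Prod.snd (congrFun heq x)
  exact_mod_cast this

lemma Dom_empty_card : (Dom (∅ : Finset (Fin m ⊕ Fin m))).card = m * m := by
  simp [Dom]

lemma Om_univ (g : Fin n → Fin m × Fin m) :
    Om univ (Dom ∅) g = univ := by
  ext h; simp [mem_Om, Dom]

lemma Ev_bound (lam z rho : ℝ) (h0 : 0 < lam) (h1 : lam ≤ 1) (hnm : (n : ℝ) ≤ lam * m)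
    (hz : 1 ≤ z) (hr : 1 ≤ rho) (hlog : lam * (z * rho - 1) ≤ Real.log rho)
    (hm : 0 < m) (v : Fin m ⊕ Fin m) (k : ℕ) :
    ((Ev n m v k).card : ℝ) * z ^ k ≤ rho * ((m : ℝ) * m) ^ n := by
  have hb := main_bound (n := n) (m := m) lam z rho h0 h1 hnm hz hr hlog (n + 1) univ {v} ∅
    (fun _ => (⟨0, hm⟩, ⟨0, hm⟩)) (by simp) (by simp)
  rw [Om_univ, Dom_empty_card] at hb
  simp only [card_singleton, pow_one, card_univ, Fintype.card_fin] at hb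
  push_cast at hb
  refine le_trans ?_ hb
  calc ((Ev n m v k).card : ℝ) * z ^ k = ∑ h ∈ Ev n m v k, z ^ k := by
        rw [sum_const, nsmul_eq_mul]
    _ ≤ ∑ h ∈ Ev n m v k, z ^ cnt univ h {v} := by
        apply sum_le_sum
        intro h hh
        exact pow_le_pow_right₀ hz (mem_filter.1 hh).2
    _ ≤ _ := by
        apply sum_le_sum_of_subset_of_nonneg (subset_univ _)
        intro h _ _
        positivity

lemma Ev_one (lam : ℝ) (h0 : 0 < lam) (h1 : lam ≤ 1) (hnm : (n : ℝ) ≤ lam * m)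
    (hm : 0 < m) (v : Fin m ⊕ Fin m) (k : ℕ) (hk : 1 ≤ k) :
    ((Ev n m v k).card : ℝ) ≤ lam * ((m : ℝ) * m) ^ n := by
  set g : Fin n → Fin m × Fin m := fun _ => (⟨0, hm⟩, ⟨0, hm⟩)
  set e := ((Dom ∅).filter (inc v)).card with he
  set f := ((Dom ∅).filter (fun p => ¬ inc v p)).card with hf
  have hef : e + f = m * m := by
    rw [← Dom_empty_card]; exact card_filter_add_card_filter_not _
  have hdis : Disjoint (Ev n m v k) (Om univ ((Dom ∅).filter (fun p => ¬ inc v p)) g) := by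
    rw [disjoint_left]
    intro h hE hO
    rw [mem_Om] at hO
    have h2 := cnt_step univ ∅ h {v} v (by simp) (fun x _ => (mem_filter.1 (hO.1 x (mem_univ x))).2)
    have h3 : cnt (univ \ ∅) h (({v} : Finset (Fin m ⊕ Fin m)).erase v ∪
        (∅ : Finset (Fin n)).image (fun x => oth v (h x))) = 0 := by
      unfold cnt
      rw [card_eq_zero, filter_eq_empty_iff]
      intro x _ hx
      simp only [erase_singleton, image_empty, union_empty] at hx
      exact reach_empty _ _ _ hx
    have h4 := (mem_filter.1 hE).2
    rw [h3] at h2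
    simp at h2
    omega
  have hle : (Ev n m v k).card + f ^ n ≤ (m * m) ^ n := by
    have h5 := card_le_univ ((Ev n m v k) ∪ (Om univ ((Dom ∅).filter (fun p => ¬ inc v p)) g))
    rw [card_union_of_disjoint hdis, card_Om, ← hf] at h5
    simpa using h5
  have hle' : ((Ev n m v k).card : ℝ) + (f : ℝ) ^ n ≤ ((m : ℝ) * m) ^ n := by exact_mod_cast hle
  have hcb := card_bound lam h0 h1 hnm ∅ v n (by simp)
  rw [Dom_empty_card, ← he] at hcb
  push_cast at hcb
  set d : ℝ := (m : ℝ) * m with hd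
  have hdpos : 0 < d := by positivity
  have hefR : (e : ℝ) + f = d := by rw [hd]; exact_mod_cast hef
  have hfd : (f : ℝ) / d = 1 + (-(e / d)) := by
    field_simp; linarith
  have hed : (e : ℝ) / d ≤ 1 := by
    rw [div_le_one hdpos]
    have : (0 : ℝ) ≤ f := Nat.cast_nonneg _
    linarith
  have hber := one_add_mul_le_pow (a := -((e : ℝ) / d)) (by linarith) n
  rw [← hfd, div_pow, le_div_iff₀ (by positivity)] at hber
  have h6 : (n : ℝ) * (e / d) ≤ lam := by
    rw [← mul_div_assoc, div_le_iff₀ hdpos]; exact hcb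
  have h7 : (1 - lam) * d ^ n ≤ (1 + n * -((e : ℝ) / d)) * d ^ n := by
    apply mul_le_mul_of_nonneg_right _ (by positivity)
    linarith
  linarith

end CuckooTail

theorem cuckoo_component_geometric_tail (ε : ℝ) (hε : 0 < ε) :
    ∃ β : ℝ, 0 < β ∧ β < 1 ∧ ∀ n m : ℕ, 0 < n → 0 < m → (1 + ε) * n ≤ m →
      ∀ v : Fin m ⊕ Fin m, ∀ k : ℕ, 1 ≤ k →
        cuckooPr n m (fun ω => k ≤ cuckooC n m ω.1 ω.2 v) ≤ β ^ k := by
  obtain ⟨lam, hlam⟩ : ∃ lam : ℝ, lam = 1 / (1 + ε) := ⟨_, rfl⟩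
  have hl0 : 0 < lam := by rw [hlam]; positivity
  have hl1 : lam < 1 := by rw [hlam, div_lt_one (by linarith)]; linarith
  obtain ⟨rho, hrho⟩ : ∃ rho : ℝ, rho = 1 + ε / 2 := ⟨_, rfl⟩
  have hr1 : 1 < rho := by rw [hrho]; linarith
  have hr0 : 0 < rho := by linarith
  have hlr : lam * rho < 1 := by
    rw [hlam, hrho, div_mul_eq_mul_div, div_lt_one (by linarith)]; linarith
  have hlr0 : 0 < lam * rho := by positivity
  obtain ⟨z, hz⟩ : ∃ z : ℝ, z = (1 + (rho - 1) / (lam * rho)) / rho := ⟨_, rfl⟩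
  have hzr : z * rho - 1 = (rho - 1) / (lam * rho) := by rw [hz]; field_simp; ring
  have hz1 : 1 < z := by
    rw [hz, lt_div_iff₀ hr0]
    have : rho - 1 < (rho - 1) / (lam * rho) := by
      rw [lt_div_iff₀ hlr0]; nlinarith
    linarith
  have hlog : lam * (z * rho - 1) ≤ Real.log rho := by
    rw [hzr]
    have h1 := Real.one_sub_inv_le_log_of_pos hr0
    have h2 : lam * ((rho - 1) / (lam * rho)) = 1 - rho⁻¹ := by field_simp
    rw [h2]; exact h1
  have hz0 : 0 < z := by linarith
  -- choice of β
  obtain ⟨y, hy⟩ : ∃ y : ℝ, y = (1 + z⁻¹) / 2 := ⟨_, rfl⟩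
  have hzi1 : z⁻¹ < 1 := inv_lt_one_of_one_lt₀ hz1
  have hzi0 : 0 < z⁻¹ := inv_pos.2 hz0
  have hy0 : 0 < y := by rw [hy]; linarith
  have hy1 : y < 1 := by rw [hy]; linarith
  have hzy : z⁻¹ / y < 1 := by rw [div_lt_one hy0, hy]; linarith
  have hzy0 : 0 < z⁻¹ / y := by positivity
  obtain ⟨N, hN⟩ := exists_pow_lt_of_lt_one (inv_pos.2 hr0) hzy
  obtain ⟨b, hb⟩ : ∃ b : ℝ, b = lam ^ (((N + 1 : ℕ) : ℝ)⁻¹) := ⟨_, rfl⟩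
  have hb0 : 0 < b := by rw [hb]; exact Real.rpow_pos_of_pos hl0 _
  have hb1 : b < 1 := by
    rw [hb]; exact Real.rpow_lt_one hl0.le hl1 (by positivity)
  have hbN : b ^ (N + 1) = lam := by
    rw [hb]; exact Real.rpow_inv_natCast_pow hl0.le (by omega)
  refine ⟨max y b, lt_max_of_lt_left hy0, max_lt hy1 hb1, ?_⟩
  intro n m hn hm hnm v k hk
  have hnm' : (n : ℝ) ≤ lam * m := by
    rw [hlam, div_mul_eq_mul_div, le_div_iff₀ (by linarith)]; linarith
  refine (CuckooTail.Pr_le v k).trans ?_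
  have hmR : (0 : ℝ) < m := by exact_mod_cast hm
  have hd : (0 : ℝ) < ((m : ℝ) * m) ^ n := by positivity
  rw [div_le_iff₀ hd]
  rcases le_or_gt k N with hkN | hkN
  · refine (CuckooTail.Ev_one lam hl0 hl1.le hnm' hm v k hk).trans ?_
    apply mul_le_mul_of_nonneg_right _ hd.le
    calc lam = b ^ (N + 1) := hbN.symm
      _ ≤ b ^ k := pow_le_pow_of_le_one hb0.le hb1.le (by omega)
      _ ≤ _ := pow_le_pow_left₀ hb0.le (le_max_right _ _) k
  · have h1 := CuckooTail.Ev_bound lam z rho hl0 hl1.le hnm' hz1.le hr1.le hlog hm v k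
    rw [← le_div_iff₀ (by positivity)] at h1
    refine h1.trans ?_
    have h2 : (z⁻¹ / y) ^ k ≤ rho⁻¹ :=
      (pow_le_pow_of_le_one hzy0.le hzy.le hkN.le).trans hN.le
    rw [div_pow, div_le_iff₀ (by positivity), inv_pow] at h2
    have h3 : rho * (z ^ k)⁻¹ ≤ y ^ k := by
      calc rho * (z ^ k)⁻¹ ≤ rho * (rho⁻¹ * y ^ k) := mul_le_mul_of_nonneg_left h2 hr0.le
        _ = y ^ k := by field_simp
    calc rho * ((m : ℝ) * m) ^ n / z ^ k = (rho * (z ^ k)⁻¹) * ((m : ℝ) * m) ^ n := by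
          rw [div_eq_mul_inv]; ring
      _ ≤ _ := by
          apply mul_le_mul_of_nonneg_right _ hd.le
          exact h3.trans (pow_le_pow_left₀ hy0.le (le_max_left _ _) k)
end

section
/- Fix a constant ε > 0. There exist constants c₂ > 0, c > 0 and a threshold n₀ (all depending only on ε) such that for all integers n ≥ n₀ and m with (1+ε)·n ≤ m, the random cuckoo graph with n edges on parts of size m satisfies: the probability that some vertex v has C(v) ≥ c₂·(log n)² is at most n^{−c·log n}. -/
open Classical

namespace CuckooAux

/-- The value `a` (an edge) is incident to a vertex of `W`. -/
def hits {m : ℕ} (W : Finset (Fin m ⊕ Fin m)) (a : Fin m × Fin m) : Prop :=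
  Sum.inl a.1 ∈ W ∨ Sum.inr a.2 ∈ W

/-- Item `x` has been revealed. -/
def rev {n m : ℕ} (x₀ : Fin n) (W : Finset (Fin m ⊕ Fin m)) (f : Fin n → Fin m × Fin m)
    (x : Fin n) : Prop := x = x₀ ∨ hits W (f x)

/-- The information revealed. -/
noncomputable def mask {n m : ℕ} (x₀ : Fin n) (W : Finset (Fin m ⊕ Fin m))
    (f : Fin n → Fin m × Fin m) : Fin n → Option (Fin m × Fin m) :=
  fun x => if rev x₀ W f x then some (f x) else none

/-- Boundary vertices. -/
def bdry {n m : ℕ} (g : Fin n → Option (Fin m × Fin m)) (W : Finset (Fin m ⊕ Fin m))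
    (u : Fin m ⊕ Fin m) : Prop :=
  u ∉ W ∧ ∃ x a, g x = some a ∧ (u = Sum.inl a.1 ∨ u = Sum.inr a.2)

/-- The next explored set. -/
noncomputable def nxt {n m : ℕ} (g : Fin n → Option (Fin m × Fin m))
    (W : Finset (Fin m ⊕ Fin m)) : Finset (Fin m ⊕ Fin m) :=
  if h : ∃ u, bdry g W u then insert h.choose W else W

/-- One exploration step. -/
noncomputable def step {n m : ℕ} (x₀ : Fin n) (f : Fin n → Fin m × Fin m)
    (W : Finset (Fin m ⊕ Fin m)) : Finset (Fin m ⊕ Fin m) := nxt (mask x₀ W f) W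

/-- The number of revealed items. -/
noncomputable def cnt {n m : ℕ} (x₀ : Fin n) (W : Finset (Fin m ⊕ Fin m))
    (f : Fin n → Fin m × Fin m) : ℕ := (Finset.univ.filter (rev x₀ W f)).card

lemma nxt_cases {n m : ℕ} (g : Fin n → Option (Fin m × Fin m))
    (W : Finset (Fin m ⊕ Fin m)) :
    (∃ v, bdry g W v ∧ nxt g W = insert v W) ∨ ((∀ u, ¬ bdry g W u) ∧ nxt g W = W) := by
  by_cases h : ∃ u, bdry g W u
  · left
    exact ⟨h.choose, h.choose_spec, by simp [nxt, h]⟩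
  · right
    exact ⟨fun u hu => h ⟨u, hu⟩, by simp [nxt, h]⟩

lemma hits_mono {m : ℕ} {W W' : Finset (Fin m ⊕ Fin m)} (h : W ⊆ W') {a : Fin m × Fin m}
    (ha : hits W a) : hits W' a := ha.imp (fun q => h q) (fun q => h q)

lemma rev_mono {n m : ℕ} {x₀ : Fin n} {W W' : Finset (Fin m ⊕ Fin m)} (h : W ⊆ W')
    {f : Fin n → Fin m × Fin m} {x : Fin n} (ha : rev x₀ W f x) : rev x₀ W' f x :=
  ha.imp id (hits_mono h)

lemma mask_eq_iff {n m : ℕ} (x₀ : Fin n) (W : Finset (Fin m ⊕ Fin m))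
    (f f₀ : Fin n → Fin m × Fin m) :
    mask x₀ W f = mask x₀ W f₀ ↔
      ∀ x, (rev x₀ W f₀ x → f x = f₀ x) ∧ (¬ rev x₀ W f₀ x → ¬ hits W (f x)) := by
  rw [funext_iff]
  refine forall_congr' fun x => ?_
  unfold mask
  by_cases h0 : rev x₀ W f₀ x
  · simp only [h0, if_true, forall_const, not_true, false_imp_iff, and_true]
    constructor
    · intro h
      by_cases h1 : rev x₀ W f x
      · simpa [h1] using h
      · simp [h1] at h
    · intro h
      have : rev x₀ W f x := by
        unfold rev at h0 ⊢
        rwa [h]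
      simp [this, h]
  · simp only [h0, if_false, false_imp_iff, true_and, not_false_iff, forall_const]
    have hx : x ≠ x₀ := fun e => h0 (Or.inl e)
    simp [rev, hx]

lemma mask_mono {n m : ℕ} (x₀ : Fin n) {W W' : Finset (Fin m ⊕ Fin m)} (h : W ⊆ W')
    (f f₀ : Fin n → Fin m × Fin m) (he : mask x₀ W' f = mask x₀ W' f₀) :
    mask x₀ W f = mask x₀ W f₀ := by
  rw [mask_eq_iff] at he ⊢
  intro x
  refine ⟨fun hr => (he x).1 (rev_mono h hr), fun hr => ?_⟩
  by_cases h' : rev x₀ W' f₀ x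
  · rw [(he x).1 h']
    exact fun q => hr (Or.inr q)
  · exact fun q => (he x).2 h' (hits_mono h q)

lemma avoid_card {m k : ℕ} (W : Finset (Fin m ⊕ Fin m)) (v : Fin m ⊕ Fin m)
    (hW : W.card ≤ k) :
    ((Finset.univ.filter (fun a : Fin m × Fin m => ¬ hits W a)).filter
      (fun a => hits (insert v W) a)).card * (m - k) ≤
      (Finset.univ.filter (fun a : Fin m × Fin m => ¬ hits W a)).card := by
  set A : Finset (Fin m) := Finset.univ.filter (fun i => Sum.inl i ∉ W) with hA
  set B : Finset (Fin m) := Finset.univ.filter (fun i => Sum.inr i ∉ W) with hB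
  have hAB : Finset.univ.filter (fun a : Fin m × Fin m => ¬ hits W a) = A ×ˢ B := by
    ext a
    simp [hits, hA, hB]
  have hAc : m - k ≤ A.card := by
    have h1 : (Finset.univ.filter (fun i : Fin m => Sum.inl i ∈ W)).card ≤ W.card :=
      Finset.card_le_card_of_injOn (fun i => (Sum.inl i : Fin m ⊕ Fin m))
        (fun i hi => by simpa using hi) (fun a _ b _ hab => Sum.inl_injective hab)
    have h2 := Finset.card_filter_add_card_filter_not (s := (Finset.univ : Finset (Fin m)))
      (fun i : Fin m => (Sum.inl i : Fin m ⊕ Fin m) ∈ W)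
    simp only [Finset.card_univ, Fintype.card_fin] at h2
    have h3 : A.card = (Finset.univ.filter (fun i : Fin m => ¬ (Sum.inl i : Fin m ⊕ Fin m) ∈ W)).card := rfl
    omega
  have hBc : m - k ≤ B.card := by
    have h1 : (Finset.univ.filter (fun i : Fin m => Sum.inr i ∈ W)).card ≤ W.card :=
      Finset.card_le_card_of_injOn (fun i => (Sum.inr i : Fin m ⊕ Fin m))
        (fun i hi => by simpa using hi) (fun a _ b _ hab => Sum.inr_injective hab)
    have h2 := Finset.card_filter_add_card_filter_not (s := (Finset.univ : Finset (Fin m)))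
      (fun i : Fin m => (Sum.inr i : Fin m ⊕ Fin m) ∈ W)
    simp only [Finset.card_univ, Fintype.card_fin] at h2
    have h3 : B.card = (Finset.univ.filter (fun i : Fin m => ¬ (Sum.inr i : Fin m ⊕ Fin m) ∈ W)).card := rfl
    omega
  rw [hAB, Finset.card_product]
  rcases v with i | i
  · have hs : (A ×ˢ B).filter (fun a => hits (insert (Sum.inl i) W) a) ⊆ {i} ×ˢ B := by
      intro a
      simp only [Finset.mem_filter, Finset.mem_product, hits, hA, hB, Finset.mem_insert,
        Finset.mem_univ, true_and, Finset.mem_singleton, Sum.inl.injEq, reduceCtorEq, false_or]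
      tauto
    have := Finset.card_le_card hs
    rw [Finset.card_product, Finset.card_singleton, one_mul] at this
    calc _ ≤ B.card * A.card := Nat.mul_le_mul this hAc
      _ = _ := mul_comm _ _
  · have hs : (A ×ˢ B).filter (fun a => hits (insert (Sum.inr i) W) a) ⊆ A ×ˢ {i} := by
      intro a
      simp only [Finset.mem_filter, Finset.mem_product, hits, hA, hB, Finset.mem_insert,
        Finset.mem_univ, true_and, Finset.mem_singleton, Sum.inr.injEq, reduceCtorEq, false_or]
      tauto
    have := Finset.card_le_card hs
    rw [Finset.card_product, Finset.card_singleton, mul_one] at this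
    exact Nat.mul_le_mul this hBc

lemma pow_cnt {n m : ℕ} (x₀ : Fin n) (W : Finset (Fin m ⊕ Fin m))
    (f : Fin n → Fin m × Fin m) (z : ℝ) :
    z ^ cnt x₀ W f = ∏ x, (if x = x₀ ∨ hits W (f x) then z else 1) := by
  rw [← Finset.prod_filter, Finset.prod_const]
  unfold cnt
  congr 2
  ext x
  simp [rev]

lemma one_step {n m k : ℕ} (hk : k < m) (z : ℝ) (hz : 1 ≤ z) (x₀ : Fin n)
    (W : Finset (Fin m ⊕ Fin m)) (hW : W.card ≤ k) (v : Fin m ⊕ Fin m)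
    (g : Fin n → Option (Fin m × Fin m)) :
    ∑ f ∈ Finset.univ.filter (fun f => mask x₀ W f = g), z ^ cnt x₀ (insert v W) f ≤
      (1 + (z - 1) / ((m - k : ℕ) : ℝ)) ^ n *
      ∑ f ∈ Finset.univ.filter (fun f => mask x₀ W f = g), z ^ cnt x₀ W f := by
  have hmk : (0 : ℝ) < ((m - k : ℕ) : ℝ) := by
    have : 0 < m - k := by omega
    exact_mod_cast this
  have hz0 : 0 ≤ (z - 1) / ((m - k : ℕ) : ℝ) := div_nonneg (by linarith) hmk.le
  by_cases hex : ∃ f₀, mask x₀ W f₀ = g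
  swap
  · have : Finset.univ.filter (fun f => mask x₀ W f = g) = ∅ := by
      ext f
      simp only [Finset.mem_filter, Finset.mem_univ, true_and, Finset.notMem_empty, iff_false]
      exact fun h => hex ⟨f, h⟩
    rw [this]
    simp
  obtain ⟨f₀, rfl⟩ := hex
  set t : Fin n → Finset (Fin m × Fin m) := fun x =>
    if rev x₀ W f₀ x then {f₀ x} else Finset.univ.filter (fun a => ¬ hits W a) with ht
  have hfil : Finset.univ.filter (fun f => mask x₀ W f = mask x₀ W f₀) = Fintype.piFinset t := by
    ext f
    simp only [Finset.mem_filter, Finset.mem_univ, true_and, Fintype.mem_piFinset, mask_eq_iff]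
    refine forall_congr' fun x => ?_
    by_cases h : rev x₀ W f₀ x <;> simp [ht, h]
  rw [hfil]
  simp only [pow_cnt]
  rw [← Finset.prod_univ_sum t (fun x a => if x = x₀ ∨ hits (insert v W) a then z else 1),
    ← Finset.prod_univ_sum t (fun x a => if x = x₀ ∨ hits W a then z else 1)]
  have hc : (1 + (z - 1) / ((m - k : ℕ) : ℝ)) ^ n =
      ∏ _x : Fin n, (1 + (z - 1) / ((m - k : ℕ) : ℝ)) := by simp
  rw [hc, ← Finset.prod_mul_distrib]
  refine Finset.prod_le_prod (fun x _ => Finset.sum_nonneg fun a _ => ?_) (fun x _ => ?_)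
  · split_ifs <;> linarith
  by_cases h : rev x₀ W f₀ x
  · have h' : rev x₀ (insert v W) f₀ x := rev_mono (Finset.subset_insert _ _) h
    have e1 : (x = x₀ ∨ hits W (f₀ x)) := h
    have e2 : (x = x₀ ∨ hits (insert v W) (f₀ x)) := h'
    simp only [ht, h, if_true, Finset.sum_singleton, e1, e2]
    nlinarith
  · have hx : x ≠ x₀ := fun e => h (Or.inl e)
    simp only [ht, h, if_false, hx, false_or]
    have hac := avoid_card W v hW
    set S := Finset.univ.filter (fun a : Fin m × Fin m => ¬ hits W a) with hS
    have hr : ∑ a ∈ S, (if hits W a then z else 1) = (S.card : ℝ) := by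
      rw [Finset.sum_congr rfl (g := fun _ => (1 : ℝ))]
      · simp
      · intro a ha
        have : ¬ hits W a := by simpa [hS] using ha
        simp [this]
    have hl : ∑ a ∈ S, (if hits (insert v W) a then z else 1) =
        (S.card : ℝ) + (z - 1) * ((S.filter (fun a => hits (insert v W) a)).card : ℝ) := by
      have : ∀ a ∈ S, (if hits (insert v W) a then z else 1) =
          1 + (z - 1) * (if hits (insert v W) a then (1 : ℝ) else 0) := by
        intro a _
        split_ifs <;> ring
      rw [Finset.sum_congr rfl this, Finset.sum_add_distrib, ← Finset.mul_sum, Finset.sum_boole]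
      simp
    rw [hr, hl]
    have hac' : ((S.filter (fun a => hits (insert v W) a)).card : ℝ) * ((m - k : ℕ) : ℝ) ≤
        (S.card : ℝ) := by exact_mod_cast hac
    have := (le_div_iff₀ hmk).2 hac'
    have h2 := mul_le_mul_of_nonneg_left this (show (0 : ℝ) ≤ z - 1 by linarith)
    calc _ ≤ (S.card : ℝ) + (z - 1) * ((S.card : ℝ) / ((m - k : ℕ) : ℝ)) := by linarith
      _ = _ := by ring

lemma moment {n m k : ℕ} (hk : k < m) (z : ℝ) (hz : 1 ≤ z) (x₀ : Fin n) (j : ℕ) :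
    ∀ (W : Finset (Fin m ⊕ Fin m)) (g : Fin n → Option (Fin m × Fin m)), W.card + j ≤ k →
    ∑ f ∈ Finset.univ.filter (fun f => mask x₀ W f = g), z ^ cnt x₀ ((step x₀ f)^[j] W) f ≤
      ((1 + (z - 1) / ((m - k : ℕ) : ℝ)) ^ n) ^ j *
      ∑ f ∈ Finset.univ.filter (fun f => mask x₀ W f = g), z ^ cnt x₀ W f := by
  have hz0 : 0 ≤ (z - 1) / ((m - k : ℕ) : ℝ) := div_nonneg (by linarith) (by positivity)
  set B := (1 + (z - 1) / ((m - k : ℕ) : ℝ)) ^ n with hB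
  have hB1 : 1 ≤ B := one_le_pow₀ (by linarith)
  have hzz : 0 ≤ z := by linarith
  induction j with
  | zero => intro W g _; simp
  | succ j ih =>
    intro W g hW
    have hrw : ∀ f ∈ Finset.univ.filter (fun f => mask x₀ W f = g),
        z ^ cnt x₀ ((step x₀ f)^[j+1] W) f = z ^ cnt x₀ ((step x₀ f)^[j] (nxt g W)) f := by
      intro f hf
      have hf' : mask x₀ W f = g := by simpa using hf
      rw [Function.iterate_succ_apply, step, hf']
    rw [Finset.sum_congr rfl hrw]
    rcases nxt_cases g W with ⟨v, hv, he⟩ | ⟨_, he⟩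
    · rw [he]
      have hsub : W ⊆ insert v W := Finset.subset_insert _ _
      have hcard : (insert v W).card + j ≤ k := by
        have := Finset.card_insert_le v W
        omega
      have key : ∑ f ∈ Finset.univ.filter (fun f => mask x₀ W f = g),
          z ^ cnt x₀ ((step x₀ f)^[j] (insert v W)) f ≤
          B ^ j * ∑ f ∈ Finset.univ.filter (fun f => mask x₀ W f = g),
            z ^ cnt x₀ (insert v W) f := by
        rw [← Finset.sum_fiberwise _ (fun f => mask x₀ (insert v W) f),
          ← Finset.sum_fiberwise _ (fun f => mask x₀ (insert v W) f)
            (fun f => z ^ cnt x₀ (insert v W) f), Finset.mul_sum]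
        refine Finset.sum_le_sum fun g' _ => ?_
        by_cases hex : ∃ f₀, mask x₀ W f₀ = g ∧ mask x₀ (insert v W) f₀ = g'
        · obtain ⟨f₀, h1, h2⟩ := hex
          have : (Finset.univ.filter (fun f => mask x₀ W f = g)).filter
              (fun f => mask x₀ (insert v W) f = g') =
              Finset.univ.filter (fun f => mask x₀ (insert v W) f = g') := by
            ext f
            simp only [Finset.mem_filter, Finset.mem_univ, true_and, and_iff_right_iff_imp]
            intro hf
            rw [← h1]
            exact mask_mono x₀ hsub f f₀ (hf.trans h2.symm)
          rw [this]
          exact ih (insert v W) g' hcard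
        · have : (Finset.univ.filter (fun f => mask x₀ W f = g)).filter
              (fun f => mask x₀ (insert v W) f = g') = ∅ := by
            ext f
            simp only [Finset.mem_filter, Finset.mem_univ, true_and, Finset.notMem_empty, iff_false]
            exact fun hf => hex ⟨f, hf⟩
          rw [this]
          simp
      refine key.trans ?_
      rw [pow_succ, mul_assoc]
      exact mul_le_mul_of_nonneg_left (one_step hk z hz x₀ W (by omega) v g) (by positivity)
    · rw [he]
      refine (ih W g (by omega)).trans ?_
      refine mul_le_mul_of_nonneg_right ?_ (Finset.sum_nonneg fun f _ => by positivity)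
      exact pow_le_pow_right₀ hB1 (Nat.le_succ j)

lemma moment_univ {n m k : ℕ} (hk : k < m) (z : ℝ) (hz : 1 ≤ z) (x₀ : Fin n) :
    ∑ f : Fin n → Fin m × Fin m, z ^ cnt x₀ ((step x₀ f)^[k] ∅) f ≤
      ((1 + (z - 1) / ((m - k : ℕ) : ℝ)) ^ n) ^ k * (z * (m * m : ℝ) ^ n) := by
  have h0 : ∀ f : Fin n → Fin m × Fin m, cnt x₀ ∅ f = 1 := by
    intro f
    unfold cnt
    rw [Finset.card_eq_one]
    refine ⟨x₀, ?_⟩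
    ext x
    simp [rev, hits]
  have hs : ∑ f : Fin n → Fin m × Fin m, z ^ cnt x₀ ∅ f = z * (m * m : ℝ) ^ n := by
    simp [h0, mul_comm]
  rw [← hs, ← Finset.sum_fiberwise _ (fun f => mask x₀ ∅ f),
    ← Finset.sum_fiberwise _ (fun f => mask x₀ ∅ f) (fun f => z ^ cnt x₀ ∅ f), Finset.mul_sum]
  exact Finset.sum_le_sum fun g _ => moment hk z hz x₀ k ∅ g (by simp)

/-- End points of revealed items. -/
noncomputable def ends {n m : ℕ} (x₀ : Fin n) (W : Finset (Fin m ⊕ Fin m))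
    (f : Fin n → Fin m × Fin m) : Finset (Fin m ⊕ Fin m) :=
  (Finset.univ.filter (rev x₀ W f)).biUnion (fun x => {Sum.inl (f x).1, Sum.inr (f x).2})

lemma mem_ends {n m : ℕ} (x₀ : Fin n) (W : Finset (Fin m ⊕ Fin m))
    (f : Fin n → Fin m × Fin m) (u : Fin m ⊕ Fin m) :
    u ∈ ends x₀ W f ↔ ∃ x, rev x₀ W f x ∧ (u = Sum.inl (f x).1 ∨ u = Sum.inr (f x).2) := by
  simp [ends]

lemma bdry_iff {n m : ℕ} (x₀ : Fin n) (W : Finset (Fin m ⊕ Fin m))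
    (f : Fin n → Fin m × Fin m) (u : Fin m ⊕ Fin m) :
    bdry (mask x₀ W f) W u ↔ u ∉ W ∧ u ∈ ends x₀ W f := by
  rw [mem_ends]
  unfold bdry mask
  refine and_congr_right fun _ => exists_congr fun x => ?_
  by_cases h : rev x₀ W f x
  · simp [h]
  · simp [h]

lemma ends_mono {n m : ℕ} (x₀ : Fin n) {W W' : Finset (Fin m ⊕ Fin m)} (h : W ⊆ W')
    (f : Fin n → Fin m × Fin m) : ends x₀ W f ⊆ ends x₀ W' f := by
  intro u
  rw [mem_ends, mem_ends]
  rintro ⟨x, hx, hu⟩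
  exact ⟨x, rev_mono h hx, hu⟩

lemma ends_insert {n m : ℕ} (x₀ : Fin n) (W : Finset (Fin m ⊕ Fin m))
    (f : Fin n → Fin m × Fin m) (v : Fin m ⊕ Fin m) (hv : v ∈ ends x₀ W f)
    (hc : (ends x₀ W f).card ≤ cnt x₀ W f + 1) :
    (ends x₀ (insert v W) f).card ≤ cnt x₀ (insert v W) f + 1 := by
  set R := Finset.univ.filter (rev x₀ W f) with hR
  set R' := Finset.univ.filter (rev x₀ (insert v W) f) with hR'
  have hRR : R ⊆ R' := by
    intro x
    simp only [hR, hR', Finset.mem_filter, Finset.mem_univ, true_and]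
    exact rev_mono (Finset.subset_insert _ _)
  let o : Fin n → Fin m ⊕ Fin m := fun x =>
    if v = Sum.inl (f x).1 then Sum.inr (f x).2 else Sum.inl (f x).1
  have hsub : ends x₀ (insert v W) f ⊆ ends x₀ W f ∪ (R' \ R).image o := by
    intro u hu
    rw [mem_ends] at hu
    obtain ⟨x, hx, hux⟩ := hu
    rw [Finset.mem_union]
    by_cases hr : rev x₀ W f x
    · left
      rw [mem_ends]
      exact ⟨x, hr, hux⟩
    by_cases huv : u = v
    · left; rwa [huv]
    right
    rw [Finset.mem_image]
    refine ⟨x, by simp [hR, hR', hx, hr], ?_⟩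
    have hv' : v = Sum.inl (f x).1 ∨ v = Sum.inr (f x).2 := by
      unfold rev hits at hx hr
      simp only [Finset.mem_insert] at hx
      push Not at hr
      rcases hx with h | (h | h) | (h | h)
      · exact absurd h hr.1
      · exact Or.inl h.symm
      · exact absurd h hr.2.1
      · exact Or.inr h.symm
      · exact absurd h hr.2.2
    simp only [o]
    split_ifs with hh
    · rcases hux with h | h
      · exact absurd (h.trans hh.symm) huv
      · exact h.symm
    · rcases hux with h | h
      · exact h.symm
      · rcases hv' with h' | h'
        · exact absurd h' hh
        · exact absurd (h.trans h'.symm) huv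
  have h1 := Finset.card_le_card hsub
  have h2 := Finset.card_union_le (ends x₀ W f) ((R' \ R).image o)
  have h3 : ((R' \ R).image o).card ≤ (R' \ R).card := Finset.card_image_le
  have h4 := Finset.card_sdiff_add_card_eq_card hRR
  have h5 : cnt x₀ W f = R.card := rfl
  have h6 : cnt x₀ (insert v W) f = R'.card := rfl
  omega

lemma explore_inv {n m : ℕ} (x₀ : Fin n) (f : Fin n → Fin m × Fin m) (j : ℕ) :
    (step x₀ f)^[j] ∅ ⊆ ends x₀ ((step x₀ f)^[j] ∅) f ∧
    (ends x₀ ((step x₀ f)^[j] ∅) f).card ≤ cnt x₀ ((step x₀ f)^[j] ∅) f + 1 ∧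
    (((step x₀ f)^[j] ∅).card = j ∨
      ends x₀ ((step x₀ f)^[j] ∅) f ⊆ ((step x₀ f)^[j] ∅)) := by
  induction j with
  | zero =>
    refine ⟨by simp, ?_, by simp⟩
    simp only [Function.iterate_zero, id]
    have h0 : Finset.univ.filter (rev x₀ ∅ f) = {x₀} := by
      ext x
      simp [rev, hits]
    unfold ends cnt
    rw [h0]
    simp
  | succ j ih =>
    rw [Function.iterate_succ_apply']
    set W := (step x₀ f)^[j] ∅ with hW
    obtain ⟨h1, h2, h3⟩ := ih
    rcases nxt_cases (mask x₀ W f) W with ⟨v, hv, he⟩ | ⟨hno, he⟩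
    · have he' : step x₀ f W = insert v W := he
      rw [he']
      rw [bdry_iff] at hv
      have hm := ends_mono x₀ (Finset.subset_insert v W) f
      refine ⟨?_, ends_insert x₀ W f v hv.2 h2, ?_⟩
      · exact Finset.insert_subset (hm hv.2) (h1.trans hm)
      · left
        rw [Finset.card_insert_of_notMem hv.1]
        rcases h3 with h3 | h3
        · rw [h3]
        · exact absurd (h3 hv.2) hv.1
    · have he' : step x₀ f W = W := he
      rw [he']
      refine ⟨h1, h2, Or.inr fun u hu => ?_⟩
      by_contra hn
      exact hno u ((bdry_iff x₀ W f u).2 ⟨hn, hu⟩)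

lemma closed_conn {n m : ℕ} (x₀ : Fin n) (h₀ h₁ : Fin n → Fin m) (W : Finset (Fin m ⊕ Fin m))
    (hc : ends x₀ W (fun x => (h₀ x, h₁ x)) ⊆ W) (a b : Fin m ⊕ Fin m)
    (h : cuckooConn n m h₀ h₁ a b) : a ∈ W ↔ b ∈ W := by
  induction h with
  | rel a b h =>
    obtain ⟨x, rfl, rfl⟩ := h
    constructor
    · intro h
      exact hc ((mem_ends _ _ _ _).2 ⟨x, Or.inr (Or.inl h), Or.inr rfl⟩)
    · intro h
      exact hc ((mem_ends _ _ _ _).2 ⟨x, Or.inr (Or.inr h), Or.inl rfl⟩)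
  | refl a => rfl
  | symm a b _ ih => exact ih.symm
  | trans a b c _ _ ih1 ih2 => exact ih1.trans ih2

lemma cnt_ge {n m k : ℕ} (x₀ : Fin n) (h₀ h₁ : Fin n → Fin m) (v : Fin m ⊕ Fin m)
    (hx : cuckooConn n m h₀ h₁ (Sum.inl (h₀ x₀)) v) (hC : k ≤ cuckooC n m h₀ h₁ v) :
    k ≤ cnt x₀ ((step x₀ (fun x => (h₀ x, h₁ x)))^[k] ∅) (fun x => (h₀ x, h₁ x)) + 1 := by
  obtain ⟨h1, h2, h3⟩ := explore_inv x₀ (fun x => (h₀ x, h₁ x)) k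
  set W := (step x₀ (fun x => (h₀ x, h₁ x)))^[k] ∅ with hW
  rcases h3 with h3 | h3
  · have := Finset.card_le_card h1
    omega
  · have hx0 : Sum.inl (h₀ x₀) ∈ W := h3 ((mem_ends _ _ _ _).2 ⟨x₀, Or.inl rfl, Or.inl rfl⟩)
    have hvW := (closed_conn x₀ h₀ h₁ W h3 _ _ hx).1 hx0
    have hle : cuckooC n m h₀ h₁ v ≤ cnt x₀ W (fun x => (h₀ x, h₁ x)) := by
      unfold cuckooC cnt
      rw [Nat.card_eq_fintype_card, Fintype.card_subtype]
      apply Finset.card_le_card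
      intro y
      simp only [Finset.mem_filter, Finset.mem_univ, true_and]
      intro hy
      exact Or.inr (Or.inl ((closed_conn x₀ h₀ h₁ W h3 _ _ hy).2 hvW))
    omega

lemma pr_bound {n m k : ℕ} (hk0 : 0 < k) (hk : k < m) (z : ℝ) (hz : 1 ≤ z)
    (E : HashPair n m → Prop)
    (hE : ∀ ω, E ω → ∃ v, k ≤ cuckooC n m ω.1 ω.2 v) :
    cuckooPr n m E ≤
      n * (z ^ 2 * ((1 + (z - 1) / ((m - k : ℕ) : ℝ)) ^ n) ^ k / z ^ k) := by
  have hz0 : 0 < z := by linarith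
  set M : ℝ := ((1 + (z - 1) / ((m - k : ℕ) : ℝ)) ^ n) ^ k with hM
  have hm : (0 : ℝ) < m := by
    have : 0 < m := by omega
    exact_mod_cast this
  let F : Fin n → Finset (Fin n → Fin m × Fin m) := fun x₀ =>
    Finset.univ.filter (fun f => k ≤ cnt x₀ ((step x₀ f)^[k] ∅) f + 1)
  have hF : ∀ x₀, ((F x₀).card : ℝ) ≤ z ^ 2 * M / z ^ k * (m * m : ℝ) ^ n := by
    intro x₀
    have h1 := moment_univ (n := n) hk z hz x₀
    have h2 : ((F x₀).card : ℝ) * z ^ k ≤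
        z * ∑ f : Fin n → Fin m × Fin m, z ^ cnt x₀ ((step x₀ f)^[k] ∅) f := by
      rw [Finset.mul_sum, ← nsmul_eq_mul, ← Finset.sum_const]
      refine (Finset.sum_le_sum fun f hf => ?_).trans
        (Finset.sum_le_sum_of_subset_of_nonneg (Finset.filter_subset _ _)
          fun f _ _ => by positivity)
      have hf' : k ≤ cnt x₀ ((step x₀ f)^[k] ∅) f + 1 := (Finset.mem_filter.1 hf).2
      rw [← pow_succ']
      exact pow_le_pow_right₀ hz hf'
    have h3 : ((F x₀).card : ℝ) * z ^ k ≤ z * (M * (z * (m * m : ℝ) ^ n)) :=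
      h2.trans (mul_le_mul_of_nonneg_left h1 hz0.le)
    rw [← le_div_iff₀ (by positivity)] at h3
    refine h3.trans (le_of_eq ?_)
    ring
  have hcard : (Nat.card (HashPair n m) : ℝ) = (m * m : ℝ) ^ n := by
    simp [mul_pow]
  have hle : Nat.card {ω : HashPair n m // E ω} ≤ ∑ x₀, (F x₀).card := by
    refine le_trans ?_ (Finset.card_biUnion_le (s := Finset.univ) (t := F))
    rw [Nat.card_eq_fintype_card, Fintype.card_subtype]
    refine Finset.card_le_card_of_injOn (fun ω x => (ω.1 x, ω.2 x)) ?_ ?_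
    · intro ω hω
      have hω' : E ω := by simpa using hω
      obtain ⟨v, hv⟩ := hE ω hω'
      have hpos : 0 < cuckooC n m ω.1 ω.2 v := by omega
      obtain ⟨⟨x₀, hx₀⟩⟩ := (Nat.card_pos_iff.1 hpos).1
      simp only [Finset.coe_biUnion, Set.mem_iUnion, Finset.mem_coe]
      exact ⟨x₀, Finset.mem_univ _, Finset.mem_filter.2 ⟨Finset.mem_univ _, cnt_ge x₀ _ _ v hx₀ hv⟩⟩
    · intro a _ b _ hab
      have := fun x => congrFun hab x
      simp only [Prod.mk.injEq] at this
      exact Prod.ext (funext fun x => (this x).1) (funext fun x => (this x).2)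
  unfold cuckooPr
  rw [hcard, div_le_iff₀ (by positivity)]
  calc (Nat.card {ω : HashPair n m // E ω} : ℝ) ≤ ∑ x₀, ((F x₀).card : ℝ) := by exact_mod_cast hle
    _ ≤ ∑ _x₀ : Fin n, z ^ 2 * M / z ^ k * (m * m : ℝ) ^ n := Finset.sum_le_sum fun x _ => hF x
    _ = _ := by simp; ring

end CuckooAux

/-- If `(1+ε)·n ≤ m` then with probability at least `1 − n^{−c·log n}` all connected
components of the cuckoo graph have fewer than `c₂·(log n)²` edges, where `c₂, c > 0` and
the threshold `n₀` depend only on `ε`. -/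
theorem cuckoo_all_components_small (ε : ℝ) (hε : 0 < ε) :
    ∃ c₂ c : ℝ, 0 < c₂ ∧ 0 < c ∧ ∃ n₀ : ℕ, ∀ n m : ℕ, n₀ ≤ n → (1 + ε) * n ≤ m →
      cuckooPr n m (fun ω =>
          ∃ v : Fin m ⊕ Fin m, c₂ * Real.log n ^ 2 ≤ (cuckooC n m ω.1 ω.2 v : ℝ))
        ≤ (n : ℝ) ^ (-(c * Real.log n)) := by
  set z : ℝ := 1 + ε / 4 with hz
  set η : ℝ := Real.log z - (z - 1) / (1 + ε / 2) with hη
  have hz1 : 1 < z := by linarith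
  have hz0 : 0 < z := by linarith
  have hηpos : 0 < η := by
    have h1 := Real.one_sub_inv_le_log_of_pos hz0
    have h2 : (z - 1) / (1 + ε / 2) < 1 - z⁻¹ := by
      have : 1 - z⁻¹ = (z - 1) / z := by field_simp
      rw [this]
      exact div_lt_div_of_pos_left (by linarith) hz0 (by linarith)
    linarith
  refine ⟨2 / η, 1, by positivity, one_pos, ?_⟩
  -- asymptotics
  have ht1 : Filter.Tendsto (fun n : ℕ => Real.log n) Filter.atTop Filter.atTop :=
    Real.tendsto_log_atTop.comp tendsto_natCast_atTop_atTop
  have hev1 : ∀ᶠ n : ℕ in Filter.atTop, 2 + 2 * Real.log z ≤ Real.log n :=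
    ht1.eventually_ge_atTop _
  have hev2 : ∀ᶠ n : ℕ in Filter.atTop, 2 / η * Real.log n ^ 2 + 1 ≤ ε / 2 * n := by
    have h1 : (fun x : ℝ => 2 / η * Real.log x ^ 2) =o[Filter.atTop] (fun x : ℝ => x) :=
      (Real.isLittleO_pow_log_id_atTop (n := 2)).const_mul_left (2 / η)
    have h2 := (h1.comp_tendsto tendsto_natCast_atTop_atTop).def (c := ε / 4) (by linarith)
    have h3 : ∀ᶠ n : ℕ in Filter.atTop, 4 / ε ≤ (n : ℝ) :=
      tendsto_natCast_atTop_atTop.eventually_ge_atTop _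
    filter_upwards [h2, h3] with n h2 h3
    simp only [Function.comp, Real.norm_eq_abs] at h2
    rw [abs_of_nonneg (by positivity : (0:ℝ) ≤ n)] at h2
    have h4 := le_trans (le_abs_self _) h2
    rw [div_le_iff₀ hε] at h3
    linarith
  obtain ⟨n₀, hn₀⟩ := Filter.eventually_atTop.1
    (hev1.and (hev2.and (Filter.eventually_ge_atTop 2)))
  refine ⟨n₀, fun n m hn hm => ?_⟩
  obtain ⟨hlog, hsmall, hn2⟩ := hn₀ n hn
  have hlz : 0 < Real.log z := Real.log_pos hz1
  have hnpos : (0 : ℝ) < n := by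
    have : 0 < n := by omega
    exact_mod_cast this
  set L := Real.log n with hL
  have hLpos : 0 < L := by linarith
  set k := ⌈2 / η * L ^ 2⌉₊ with hk
  have hkpos : 0 < k := Nat.ceil_pos.2 (by positivity)
  have hk1 : 2 / η * L ^ 2 ≤ k := Nat.le_ceil _
  have hk2 : (k : ℝ) < 2 / η * L ^ 2 + 1 := Nat.ceil_lt_add_one (by positivity)
  have hkm : k < m := by
    have : (k : ℝ) < m := by nlinarith
    exact_mod_cast this
  have hb := CuckooAux.pr_bound hkpos hkm z hz1.le
    (fun ω : HashPair n m => ∃ v : Fin m ⊕ Fin m, 2 / η * L ^ 2 ≤ (cuckooC n m ω.1 ω.2 v : ℝ))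
    (fun ω ⟨v, hv⟩ => ⟨v, Nat.ceil_le.2 hv⟩)
  refine hb.trans ?_
  have hmk : (1 + ε / 2) * n ≤ ((m - k : ℕ) : ℝ) := by
    rw [Nat.cast_sub hkm.le]
    nlinarith
  have hmkpos : (0 : ℝ) < ((m - k : ℕ) : ℝ) := lt_of_lt_of_le (by positivity) hmk
  have hB : ((1 + (z - 1) / ((m - k : ℕ) : ℝ)) ^ n) ^ k ≤
      Real.exp ((z - 1) / (1 + ε / 2) * k) := by
    have h1 : 1 + (z - 1) / ((m - k : ℕ) : ℝ) ≤ Real.exp ((z - 1) / ((m - k : ℕ) : ℝ)) := by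
      rw [add_comm]; exact Real.add_one_le_exp _
    have hnn : 0 ≤ (z - 1) / ((m - k : ℕ) : ℝ) := div_nonneg (by linarith) hmkpos.le
    calc _ ≤ ((Real.exp ((z - 1) / ((m - k : ℕ) : ℝ))) ^ n) ^ k := by gcongr
      _ = Real.exp (n * ((z - 1) / ((m - k : ℕ) : ℝ)) * k) := by
        rw [← Real.exp_nat_mul, ← Real.exp_nat_mul]; ring_nf
      _ ≤ _ := by
        apply Real.exp_le_exp.2
        refine mul_le_mul_of_nonneg_right ?_ (by positivity)
        rw [mul_div_assoc', div_le_div_iff₀ hmkpos (by positivity)]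
        nlinarith
  have hzk : z ^ k = Real.exp (Real.log z * k) := by
    rw [mul_comm, Real.exp_nat_mul, Real.exp_log hz0]
  have hz2 : z ^ 2 = Real.exp (2 * Real.log z) := by
    have := Real.exp_nat_mul (Real.log z) 2
    rw [Real.exp_log hz0] at this
    rw [← this]; norm_num
  have hnL : (n : ℝ) = Real.exp L := (Real.exp_log hnpos).symm
  have hfin : (n : ℝ) ^ (-(1 * L)) = Real.exp (-(L * L)) := by
    rw [Real.rpow_def_of_pos hnpos]; congr 1; ring
  rw [hfin]
  calc (n : ℝ) * (z ^ 2 * ((1 + (z - 1) / ((m - k : ℕ) : ℝ)) ^ n) ^ k / z ^ k)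
      ≤ n * (z ^ 2 * Real.exp ((z - 1) / (1 + ε / 2) * k) / z ^ k) := by gcongr
    _ = Real.exp (L + (2 * Real.log z + (z - 1) / (1 + ε / 2) * k - Real.log z * k)) := by
      rw [hzk, hz2, hnL, ← Real.exp_add, ← Real.exp_sub, ← Real.exp_add]
    _ ≤ _ := by
      apply Real.exp_le_exp.2
      have h1 : η * k ≥ 2 * L ^ 2 := by
        have := mul_le_mul_of_nonneg_left hk1 hηpos.le
        have e : η * (2 / η * L ^ 2) = 2 * L ^ 2 := by field_simp
        linarith
      have h2 : (z - 1) / (1 + ε / 2) * k - Real.log z * k = -(η * k) := by rw [hη]; ring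
      nlinarith
end

section
/- Fix a constant ε > 0. There exists a constant K, depending only on ε, such that for all positive integers n and m with (1+ε)·n ≤ m and every vertex v of the random cuckoo graph with n edges on parts of size m, the expected component size satisfies E[C(v)] ≤ K. -/
open Classical

namespace CuckooPf

abbrev Om (n m : ℕ) := Bool × Fin n → Fin m

def side {n : ℕ} (b : Bool) : List (Fin n) → Bool
  | [] => b
  | _ :: l => !(side b l)

def endv {n m : ℕ} (b : Bool) (a : Fin m) (w : Om n m) : List (Fin n) → Fin m
  | [] => a
  | x :: l => w (!(side b l), x)

def Good {n m : ℕ} (b : Bool) (a : Fin m) (w : Om n m) : List (Fin n) → Prop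
  | [] => True
  | x :: l => w (side b l, x) = endv b a w l ∧ Good b a w l

theorem endv_update {n m : ℕ} (b : Bool) (a : Fin m) (w : Om n m) (l : List (Fin n))
    (c : Bool) (x : Fin n) (hx : x ∉ l) (t : Fin m) :
    endv b a (Function.update w (c, x) t) l = endv b a w l := by
  cases l with
  | nil => rfl
  | cons y l =>
    have : x ≠ y := fun h => hx (by simp [h])
    simp only [endv]
    rw [Function.update_of_ne]
    simp [this.symm]

theorem good_update {n m : ℕ} (b : Bool) (a : Fin m) (w : Om n m) (l : List (Fin n))
    (c : Bool) (x : Fin n) (hx : x ∉ l) (t : Fin m) :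
    Good b a (Function.update w (c, x) t) l ↔ Good b a w l := by
  induction l with
  | nil => rfl
  | cons y l ih =>
    have h1 : x ≠ y := fun h => hx (by simp [h])
    have h2 : x ∉ l := fun h => hx (by simp [h])
    simp only [Good]
    rw [Function.update_of_ne (by simp [h1.symm]), endv_update _ _ _ _ _ _ h2, ih h2]

theorem count_step {n m : ℕ} (b : Bool) (a : Fin m) (x : Fin n) (l : List (Fin n)) (hx : x ∉ l) :
    (Finset.univ.filter fun w : Om n m => Good b a w (x :: l)).card * m ≤
      (Finset.univ.filter fun w : Om n m => Good b a w l).card := by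
  have h : (Finset.univ.filter fun w : Om n m => Good b a w (x :: l)).card * m =
      ((Finset.univ.filter fun w : Om n m => Good b a w (x :: l)) ×ˢ
        (Finset.univ : Finset (Fin m))).card := by
    rw [Finset.card_product, Finset.card_univ, Fintype.card_fin]
  rw [h]
  refine Finset.card_le_card_of_injOn
    (fun p => Function.update p.1 (side b l, x) p.2) ?_ ?_
  · rintro ⟨w, t⟩ hp
    have hp := (Finset.mem_filter.1 (Finset.mem_product.1 (Finset.mem_coe.1 hp)).1).2
    refine Finset.mem_coe.2 (Finset.mem_filter.2 ⟨Finset.mem_univ _, ?_⟩)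
    exact (good_update _ _ _ _ _ _ hx _).2 hp.2
  · rintro ⟨w, t⟩ hp ⟨w', t'⟩ hp' heq
    have hp := (Finset.mem_filter.1 (Finset.mem_product.1 (Finset.mem_coe.1 hp)).1).2
    have hp' := (Finset.mem_filter.1 (Finset.mem_product.1 (Finset.mem_coe.1 hp')).1).2
    dsimp only at heq
    simp only [Good] at hp hp'
    have ht : t = t' := by
      have := congrFun heq (side b l, x)
      simpa using this
    have hE : endv b a w l = endv b a w' l := by
      rw [← endv_update b a w l (side b l) x hx t, heq, endv_update _ _ _ _ _ _ hx]
    have hw : w = w' := by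
      funext i
      by_cases hi : i = (side b l, x)
      · rw [hi, hp.1, hp'.1, hE]
      · have := congrFun heq i
        simpa [Function.update_of_ne hi] using this
    rw [ht, hw]

theorem count_good {n m : ℕ} (b : Bool) (a : Fin m) (l : List (Fin n)) (hl : l.Nodup) :
    (Finset.univ.filter fun w : Om n m => Good b a w l).card * m ^ l.length ≤
      Fintype.card (Om n m) := by
  induction l with
  | nil =>
    rw [List.length_nil, pow_zero, mul_one]
    exact Finset.card_le_univ _
  | cons x l ih =>
    rw [List.nodup_cons] at hl
    refine le_trans ?_ (ih hl.2)
    rw [List.length_cons, pow_succ', ← mul_assoc]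
    exact Nat.mul_le_mul_right _ (count_step b a x l hl.1)

def R {n m : ℕ} (b : Bool) (a : Fin m) (w : Om n m) (x : Fin n) : Prop :=
  ∃ l : List (Fin n), (x :: l).Nodup ∧ Good b a w (x :: l)

theorem R_of_mem {n m : ℕ} (b : Bool) (a : Fin m) (w : Om n m) (l : List (Fin n))
    (hl : l.Nodup) (hg : Good b a w l) (x : Fin n) (hx : x ∈ l) : R b a w x := by
  induction l with
  | nil => simp at hx
  | cons y l ih =>
    rcases List.mem_cons.1 hx with rfl | h
    · exact ⟨l, hl, hg⟩
    · exact ih (List.nodup_cons.1 hl).2 hg.2 h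

/-- vertices reached by good paths -/
def S {n m : ℕ} (b : Bool) (a : Fin m) (w : Om n m) (c : Bool) (u : Fin m) : Prop :=
  ∃ l : List (Fin n), l.Nodup ∧ Good b a w l ∧ side b l = c ∧ endv b a w l = u

theorem R_of_S {n m : ℕ} (b : Bool) (a : Fin m) (w : Om n m) (c : Bool) (x : Fin n)
    (h : S b a w c (w (c, x))) : R b a w x := by
  obtain ⟨l, hl, hg, hs, he⟩ := h
  by_cases hx : x ∈ l
  · exact R_of_mem b a w l hl hg x hx
  · exact ⟨l, List.nodup_cons.2 ⟨hx, hl⟩, by rw [hs, he], hg⟩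

theorem S_of_R {n m : ℕ} (b : Bool) (a : Fin m) (w : Om n m) (c : Bool) (x : Fin n)
    (h : R b a w x) : S b a w c (w (c, x)) := by
  obtain ⟨l, hl, hg⟩ := h
  by_cases hc : side b l = c
  · exact ⟨l, (List.nodup_cons.1 hl).2, hg.2, hc, by rw [← hg.1, hc]⟩
  · have : (!side b l) = c := by
      revert hc; cases side b l <;> cases c <;> simp
    exact ⟨x :: l, hl, hg, this, by simp only [endv]; rw [this]⟩

def toOm {n m : ℕ} : HashPair n m ≃ Om n m where
  toFun w p := if p.1 then w.2 p.2 else w.1 p.2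
  invFun w := (fun x => w (false, x), fun x => w (true, x))
  left_inv w := by simp
  right_inv w := by funext ⟨c, x⟩; cases c <;> simp

def SV {n m : ℕ} (b : Bool) (a : Fin m) (w : Om n m) : Fin m ⊕ Fin m → Prop
  | Sum.inl u => S b a w false u
  | Sum.inr u => S b a w true u

theorem SV_conn {n m : ℕ} (b : Bool) (a : Fin m) (w : HashPair n m) (u v : Fin m ⊕ Fin m)
    (h : cuckooConn n m w.1 w.2 u v) : SV b a (toOm w) u ↔ SV b a (toOm w) v := by
  induction h with
  | rel u v h =>
    obtain ⟨x, rfl, rfl⟩ := h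
    exact ⟨fun h => S_of_R b a (toOm w) true x (R_of_S b a (toOm w) false x h),
      fun h => S_of_R b a (toOm w) false x (R_of_S b a (toOm w) true x h)⟩
  | refl => rfl
  | symm _ _ _ ih => exact ih.symm
  | trans _ _ _ _ _ h1 h2 => exact h1.trans h2

def vtx {m : ℕ} (b : Bool) (a : Fin m) : Fin m ⊕ Fin m := if b then Sum.inr a else Sum.inl a

theorem R_of_conn {n m : ℕ} (b : Bool) (a : Fin m) (w : HashPair n m) (x : Fin n)
    (h : cuckooConn n m w.1 w.2 (Sum.inl (w.1 x)) (vtx b a)) : R b a (toOm w) x := by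
  have h1 : SV b a (toOm w) (vtx b a) := by
    cases b <;> exact ⟨[], List.nodup_nil, trivial, rfl, rfl⟩
  have h2 := (SV_conn b a w _ _ h).2 h1
  exact R_of_S b a (toOm w) false x h2

theorem C_le {n m : ℕ} (b : Bool) (a : Fin m) (w : HashPair n m) :
    cuckooC n m w.1 w.2 (vtx b a) ≤ ∑ k ∈ Finset.range n,
      ∑ l : List.Vector (Fin n) (k + 1), if l.1.Nodup ∧ Good b a (toOm w) l.1 then 1 else 0 := by
  have hR : ∀ x : {x : Fin n // cuckooConn n m w.1 w.2 (Sum.inl (w.1 x)) (vtx b a)},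
      R b a (toOm w) x.1 := fun x => R_of_conn b a w x.1 x.2
  choose f hf using hR
  simp only [← Finset.card_filter]
  rw [← Finset.card_sigma, cuckooC, Nat.card_eq_fintype_card, ← Finset.card_univ]
  refine Finset.card_le_card_of_injOn
    (fun x => (⟨(f x).length, ⟨x.1 :: f x, rfl⟩⟩ : Σ k, List.Vector (Fin n) (k + 1))) ?_ ?_
  · intro x _
    have := (hf x).1.length_le_card
    simp at this
    simp only [Finset.coe_sigma, Set.mem_sigma_iff]
    simp only [Finset.coe_range, Set.mem_Iio, Finset.coe_filter, Finset.mem_univ, true_and]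
    exact ⟨by omega, hf x⟩
  · intro x _ y _ h
    have h2 : (fun s : (Σ k, List.Vector (Fin n) (k + 1)) => s.2.1)
      ⟨(f x).length, ⟨x.1 :: f x, rfl⟩⟩ = (fun s : (Σ k, List.Vector (Fin n) (k + 1)) => s.2.1)
      ⟨(f y).length, ⟨y.1 :: f y, rfl⟩⟩ :=
      congrArg (fun s : (Σ k, List.Vector (Fin n) (k + 1)) => s.2.1) h
    simp only [List.cons.injEq] at h2
    exact Subtype.ext h2.1

theorem sum_le {n m : ℕ} (hm : 0 < m) (b : Bool) (a : Fin m) :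
    (∑ w : HashPair n m, (cuckooC n m w.1 w.2 (vtx b a) : ℝ)) ≤
      ∑ k ∈ Finset.range n, ((n : ℝ) / m) ^ (k + 1) * (Nat.card (HashPair n m) : ℝ) := by
  have h1 : (∑ w : HashPair n m, cuckooC n m w.1 w.2 (vtx b a)) ≤
      ∑ k ∈ Finset.range n, ∑ l : List.Vector (Fin n) (k + 1), ∑ w : HashPair n m,
        if l.1.Nodup ∧ Good b a (toOm w) l.1 then 1 else 0 := by
    refine (Finset.sum_le_sum fun w _ => C_le b a w).trans ?_
    rw [Finset.sum_comm]
    refine Finset.sum_le_sum fun k _ => ?_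
    rw [Finset.sum_comm]
  have h1' : (∑ w : HashPair n m, (cuckooC n m w.1 w.2 (vtx b a) : ℝ)) ≤
      ∑ k ∈ Finset.range n, ∑ l : List.Vector (Fin n) (k + 1), (((∑ w : HashPair n m,
        if l.1.Nodup ∧ Good b a (toOm w) l.1 then 1 else 0) : ℕ) : ℝ) := by
    exact_mod_cast h1
  refine h1'.trans (Finset.sum_le_sum fun k _ => ?_)
  have hm' : (0 : ℝ) < m := by exact_mod_cast hm
  have hb : ∀ l : List.Vector (Fin n) (k + 1), (((∑ w : HashPair n m,
        if l.1.Nodup ∧ Good b a (toOm w) l.1 then 1 else 0) : ℕ) : ℝ) ≤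
        (Nat.card (HashPair n m) : ℝ) / m ^ (k + 1) := by
    intro l
    by_cases hl : l.1.Nodup
    · rw [le_div_iff₀ (by positivity)]
      have h := count_good b a l.1 hl (m := m)
      rw [l.2, ← Fintype.card_congr (toOm (n := n) (m := m))] at h
      have e : (∑ w : HashPair n m, if l.1.Nodup ∧ Good b a (toOm w) l.1 then 1 else 0) =
          (Finset.univ.filter fun w : Om n m => Good b a w l.1).card := by
        rw [Finset.card_filter]
        exact Fintype.sum_equiv toOm _ _ (fun w => by simp [hl])
      rw [e, Nat.card_eq_fintype_card]
      exact_mod_cast h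
    · simp only [hl, false_and, if_false, Finset.sum_const_zero, Nat.cast_zero]
      positivity
  refine (Finset.sum_le_sum fun l _ => hb l).trans (le_of_eq ?_)
  rw [Finset.sum_const, Finset.card_univ, card_vector, Fintype.card_fin, nsmul_eq_mul, div_pow]
  push_cast
  ring

end CuckooPf

/-- If `(1+ε)·n ≤ m` then the expected component size `E[C(v)]` is bounded by a constant
`K` depending only on `ε`, for every vertex `v`. -/
theorem cuckoo_expected_component_size_bounded (ε : ℝ) (hε : 0 < ε) :
    ∃ K : ℝ, ∀ n m : ℕ, 0 < n → 0 < m → (1 + ε) * n ≤ m → ∀ v : Fin m ⊕ Fin m,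
      cuckooE n m (fun ω => (cuckooC n m ω.1 ω.2 v : ℝ)) ≤ K := by
  refine ⟨(1 - (1 + ε)⁻¹)⁻¹, ?_⟩
  intro n m hn hm hnm v
  have hm' : (0 : ℝ) < m := by exact_mod_cast hm
  have hv : ∃ b a, v = CuckooPf.vtx b a := by
    rcases v with a | a
    · exact ⟨false, a, rfl⟩
    · exact ⟨true, a, rfl⟩
  obtain ⟨b, a, rfl⟩ := hv
  have : Nonempty (Fin m) := ⟨a⟩
  have hN : (0 : ℝ) < (Nat.card (HashPair n m) : ℝ) := by
    exact_mod_cast Nat.card_pos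
  have hq0 : (0 : ℝ) ≤ (1 + ε)⁻¹ := by positivity
  have hq1 : (1 + ε)⁻¹ < 1 := inv_lt_one_of_one_lt₀ (by linarith)
  have hr : (n : ℝ) / m ≤ (1 + ε)⁻¹ := by
    rw [div_le_iff₀ hm', inv_mul_eq_div, le_div_iff₀ (by positivity)]
    linarith
  unfold cuckooE
  rw [div_le_iff₀ hN]
  refine (CuckooPf.sum_le hm b a).trans ?_
  rw [← Finset.sum_mul]
  refine mul_le_mul_of_nonneg_right ?_ hN.le
  calc ∑ k ∈ Finset.range n, ((n : ℝ) / m) ^ (k + 1)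
      ≤ ∑ k ∈ Finset.range n, ((1 + ε)⁻¹) ^ k := by
        refine Finset.sum_le_sum fun k _ => ?_
        refine (pow_le_pow_left₀ (by positivity) hr (k + 1)).trans ?_
        exact pow_le_pow_of_le_one hq0 hq1.le (Nat.le_succ k)
    _ ≤ ∑' k : ℕ, ((1 + ε)⁻¹) ^ k :=
        (summable_geometric_of_lt_one hq0 hq1).sum_le_tsum _ (fun k _ => by positivity)
    _ = _ := tsum_geometric_of_lt_one hq0 hq1
end

section
/- There is a universal constant c > 0 such that for all positive integers n, m, every i ≥ 1, and every real λ > 0, the random cuckoo graph with n edges on parts of size m satisfies Pr(|X_i − E[X_i]| ≥ c·i·λ·√n) ≤ 2·e^{−λ²/2}. -/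
open Classical

/-! ### Azuma / bounded differences on a finite product -/

lemma chord_exp (u s : ℝ) (h1 : -1 ≤ s) (h2 : s ≤ 1) :
    Real.exp (s * u) ≤ Real.cosh u + s * Real.sinh u := by
  have h := convexOn_exp.2 (Set.mem_univ u) (Set.mem_univ (-u))
    (show 0 ≤ (1 + s) / 2 by linarith) (show 0 ≤ (1 - s) / 2 by linarith) (by ring)
  simp only [smul_eq_mul] at h
  rw [Real.cosh_eq, Real.sinh_eq]
  have e : (1 + s) / 2 * u + (1 - s) / 2 * -u = s * u := by ring
  rw [e] at h
  linarith

lemma one_step {α : Type*} [Fintype α] (y : α → ℝ) (D t : ℝ) (hD : 0 < D)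
    (h0 : ∑ a, y a = 0) (hy : ∀ a, |y a| ≤ D) :
    ∑ a, Real.exp (t * y a) ≤ Fintype.card α * Real.exp (t ^ 2 * D ^ 2 / 2) := by
  have h1 : ∀ a, Real.exp (t * y a) ≤ Real.cosh (t * D) + y a * (Real.sinh (t * D) / D) := by
    intro a
    have h := chord_exp (t * D) (y a / D)
      (by rw [le_div_iff₀ hD]; linarith [(abs_le.1 (hy a)).1])
      (by rw [div_le_iff₀ hD]; linarith [(abs_le.1 (hy a)).2])
    have e : y a / D * (t * D) = t * y a := by field_simp
    have e2 : y a / D * Real.sinh (t * D) = y a * (Real.sinh (t * D) / D) := by ring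
    rw [e, e2] at h
    exact h
  calc ∑ a, Real.exp (t * y a)
      ≤ ∑ a, (Real.cosh (t * D) + y a * (Real.sinh (t * D) / D)) :=
        Finset.sum_le_sum fun a _ => h1 a
    _ = Fintype.card α * Real.cosh (t * D) := by
        rw [Finset.sum_add_distrib, ← Finset.sum_mul, h0]; simp
    _ ≤ _ := by
        have := Real.cosh_le_exp_half_sq (t * D)
        rw [mul_pow] at this
        gcongr

lemma mgf_bound {α : Type} [Fintype α] [Nonempty α] (D t : ℝ) (hD : 0 < D) :
    ∀ (n : ℕ) (f : (Fin n → α) → ℝ),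
      (∀ ω x a, |f ω - f (Function.update ω x a)| ≤ D) →
      ∑ ω, Real.exp (t * (f ω - (∑ ω', f ω') / (Fintype.card α : ℝ) ^ n))
        ≤ (Fintype.card α : ℝ) ^ n * Real.exp (n * (t ^ 2 * D ^ 2 / 2)) := by
  have hc : (0 : ℝ) < Fintype.card α := by exact_mod_cast Fintype.card_pos
  intro n
  induction n with
  | zero => intro f hf; simp
  | succ n ih =>
    intro f hf
    have split : ∀ F : (Fin (n + 1) → α) → ℝ,
        ∑ ω, F ω = ∑ ω' : Fin n → α, ∑ a, F (Fin.cons a ω') := by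
      intro F
      rw [← (Fin.consEquiv (fun _ => α)).sum_comp, Fintype.sum_prod_type_right]
      rfl
    set g : (Fin n → α) → ℝ := fun ω' => (∑ a, f (Fin.cons a ω')) / Fintype.card α with hg
    have hgd : ∀ ω x a, |g ω - g (Function.update ω x a)| ≤ D := by
      intro ω x a
      simp only [hg]
      rw [← sub_div, ← Finset.sum_sub_distrib, abs_div, abs_of_pos hc, div_le_iff₀ hc]
      refine (Finset.abs_sum_le_sum_abs _ _).trans ?_
      calc _ ≤ ∑ b : α, D := by
            refine Finset.sum_le_sum fun b _ => ?_
            have := hf (Fin.cons b ω) x.succ a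
            rwa [← Fin.cons_update] at this
        _ = _ := by simp [mul_comm]
    have hmean : (∑ ω, f ω) / (Fintype.card α : ℝ) ^ (n + 1)
        = (∑ ω', g ω') / (Fintype.card α : ℝ) ^ n := by
      rw [split, hg, ← Finset.sum_div, pow_succ, div_div, mul_comm]
    rw [hmean, split]
    set M := (∑ ω', g ω') / (Fintype.card α : ℝ) ^ n with hM
    have hstep : ∀ ω' : Fin n → α, ∑ a, Real.exp (t * (f (Fin.cons a ω') - g ω'))
        ≤ Fintype.card α * Real.exp (t ^ 2 * D ^ 2 / 2) := by
      intro ω'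
      apply one_step _ D t hD
      · rw [Finset.sum_sub_distrib]
        simp only [hg, Finset.sum_const, Finset.card_univ, nsmul_eq_mul]
        field_simp; ring
      · intro a
        have e : f (Fin.cons a ω') - g ω'
            = (∑ b, (f (Fin.cons a ω') - f (Fin.cons b ω'))) / Fintype.card α := by
          rw [Finset.sum_sub_distrib]
          simp only [hg, Finset.sum_const, Finset.card_univ, nsmul_eq_mul]
          field_simp
        rw [e, abs_div, abs_of_pos hc, div_le_iff₀ hc]
        refine (Finset.abs_sum_le_sum_abs _ _).trans ?_
        calc _ ≤ ∑ b : α, D := by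
              refine Finset.sum_le_sum fun b _ => ?_
              have := hf (Fin.cons a ω') 0 b
              rwa [Fin.update_cons_zero] at this
          _ = _ := by simp [mul_comm]
    calc ∑ ω' : Fin n → α, ∑ a, Real.exp (t * (f (Fin.cons a ω') - M))
        = ∑ ω' : Fin n → α, Real.exp (t * (g ω' - M)) *
            ∑ a, Real.exp (t * (f (Fin.cons a ω') - g ω')) := by
          refine Finset.sum_congr rfl fun ω' _ => ?_
          rw [Finset.mul_sum]
          refine Finset.sum_congr rfl fun a _ => ?_
          rw [← Real.exp_add]; congr 1; ring
      _ ≤ ∑ ω' : Fin n → α, Real.exp (t * (g ω' - M)) *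
            (Fintype.card α * Real.exp (t ^ 2 * D ^ 2 / 2)) := by
          refine Finset.sum_le_sum fun ω' _ => ?_
          exact mul_le_mul_of_nonneg_left (hstep ω') (Real.exp_pos _).le
      _ = (∑ ω' : Fin n → α, Real.exp (t * (g ω' - M))) *
            (Fintype.card α * Real.exp (t ^ 2 * D ^ 2 / 2)) := by rw [Finset.sum_mul]
      _ ≤ ((Fintype.card α : ℝ) ^ n * Real.exp (n * (t ^ 2 * D ^ 2 / 2))) *
            (Fintype.card α * Real.exp (t ^ 2 * D ^ 2 / 2)) := by
          refine mul_le_mul_of_nonneg_right (ih g hgd) (by positivity)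
      _ = _ := by
          have : ((n + 1 : ℕ) : ℝ) * (t ^ 2 * D ^ 2 / 2)
            = n * (t ^ 2 * D ^ 2 / 2) + t ^ 2 * D ^ 2 / 2 := by push_cast; ring
          rw [this, Real.exp_add, pow_succ]; ring

lemma tail_abs {α : Type} [Fintype α] [Nonempty α] (D lam : ℝ) (hD : 0 < D) (hl : 0 < lam)
    (n : ℕ) (hn : 0 < n) (f : (Fin n → α) → ℝ)
    (hf : ∀ ω x a, |f ω - f (Function.update ω x a)| ≤ D) :
    (Nat.card {ω // D * lam * Real.sqrt n ≤
        |f ω - (∑ ω', f ω') / (Fintype.card α : ℝ) ^ n|} : ℝ)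
      ≤ (Fintype.card α : ℝ) ^ n * (2 * Real.exp (-lam ^ 2 / 2)) := by
  have hc : (0 : ℝ) < Fintype.card α := by exact_mod_cast Fintype.card_pos
  have hs : 0 < Real.sqrt n := Real.sqrt_pos.2 (by exact_mod_cast hn)
  have hss : Real.sqrt n ^ 2 = n := Real.sq_sqrt (by positivity)
  set M := (∑ ω', f ω') / (Fintype.card α : ℝ) ^ n with hM
  set t := lam / (D * Real.sqrt n) with ht
  have ht0 : 0 < t := by positivity
  have h1 := mgf_bound D t hD n f hf
  have h2 := mgf_bound D (-t) hD n f hf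
  rw [← hM] at h1 h2
  have e1 : (n : ℝ) * (t ^ 2 * D ^ 2 / 2) = lam ^ 2 / 2 := by
    rw [ht, div_pow, mul_pow, hss]
    have : (n : ℝ) ≠ 0 := by positivity
    field_simp
  have e3 : t * (D * lam * Real.sqrt n) = lam ^ 2 := by
    rw [ht]; field_simp
  rw [neg_sq] at h2
  rw [e1] at h1 h2
  have key : (Nat.card {ω // D * lam * Real.sqrt n ≤ |f ω - M|} : ℝ) * Real.exp (lam ^ 2)
      ≤ ∑ ω, (Real.exp (t * (f ω - M)) + Real.exp (-t * (f ω - M))) := by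
    rw [Nat.card_eq_fintype_card, Fintype.card_subtype, ← nsmul_eq_mul, ← Finset.sum_const]
    refine (Finset.sum_le_sum (g := fun ω =>
      Real.exp (t * (f ω - M)) + Real.exp (-t * (f ω - M))) ?_).trans
      (Finset.sum_le_sum_of_subset_of_nonneg (Finset.subset_univ _)
        fun _ _ _ => by positivity)
    intro ω hω
    have hω' := (Finset.mem_filter.1 hω).2
    rcases le_abs.1 hω' with h | h
    · have : Real.exp (lam ^ 2) ≤ Real.exp (t * (f ω - M)) := by
        rw [Real.exp_le_exp, ← e3]; gcongr
      linarith [Real.exp_pos (-t * (f ω - M))]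
    · have : Real.exp (lam ^ 2) ≤ Real.exp (-t * (f ω - M)) := by
        rw [Real.exp_le_exp, ← e3, neg_mul, ← mul_neg]; gcongr
      linarith [Real.exp_pos (t * (f ω - M))]
  rw [Finset.sum_add_distrib] at key
  have e4 : Real.exp (-lam ^ 2 / 2) * Real.exp (lam ^ 2) = Real.exp (lam ^ 2 / 2) := by
    rw [← Real.exp_add]; congr 1; ring
  refine le_of_mul_le_mul_right ?_ (Real.exp_pos (lam ^ 2))
  calc _ ≤ _ := key
    _ ≤ (Fintype.card α : ℝ) ^ n * Real.exp (lam ^ 2 / 2)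
        + (Fintype.card α : ℝ) ^ n * Real.exp (lam ^ 2 / 2) := add_le_add h1 h2
    _ = _ := by rw [← e4]; ring

/-! ### Combinatorics of the cuckoo graph -/

section graph
variable {n m : ℕ}

lemma conn_symm {h₀ h₁ : Fin n → Fin m} {a b} (h : cuckooConn n m h₀ h₁ a b) :
    cuckooConn n m h₀ h₁ b a := Relation.EqvGen.symm _ _ h

lemma conn_trans {h₀ h₁ : Fin n → Fin m} {a b c} (h : cuckooConn n m h₀ h₁ a b)
    (h' : cuckooConn n m h₀ h₁ b c) :
    cuckooConn n m h₀ h₁ a c := Relation.EqvGen.trans _ _ _ h h'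

lemma conn_edge (h₀ h₁ : Fin n → Fin m) (x : Fin n) :
    cuckooConn n m h₀ h₁ (Sum.inl (h₀ x)) (Sum.inr (h₁ x)) :=
  Relation.EqvGen.rel _ _ ⟨x, rfl, rfl⟩

lemma conn_endpoint {h₀ h₁ : Fin n → Fin m} {a b} (h : cuckooConn n m h₀ h₁ a b) :
    a = b ∨ ((∃ x, a = Sum.inl (h₀ x) ∨ a = Sum.inr (h₁ x)) ∧
      (∃ x, b = Sum.inl (h₀ x) ∨ b = Sum.inr (h₁ x))) := by
  induction h with
  | rel a b h =>
    obtain ⟨x, h1, h2⟩ := h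
    exact Or.inr ⟨⟨x, Or.inl h1⟩, ⟨x, Or.inr h2⟩⟩
  | refl a => exact Or.inl rfl
  | symm a b _ ih =>
    rcases ih with h | h
    · exact Or.inl h.symm
    · exact Or.inr h.symm
  | trans a b c _ _ ih1 ih2 =>
    rcases ih1 with rfl | h1
    · exact ih2
    · rcases ih2 with rfl | h2
      · exact Or.inr h1
      · exact Or.inr ⟨h1.1, h2.2⟩

lemma C_congr {h₀ h₁ : Fin n → Fin m} {u v} (h : cuckooConn n m h₀ h₁ u v) :
    cuckooC n m h₀ h₁ u = cuckooC n m h₀ h₁ v := by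
  unfold cuckooC
  congr 1
  have : ∀ x, cuckooConn n m h₀ h₁ (Sum.inl (h₀ x)) u ↔ cuckooConn n m h₀ h₁ (Sum.inl (h₀ x)) v :=
    fun x => ⟨fun k => conn_trans k h, fun k => conn_trans k (conn_symm h)⟩
  simp only [this]

/-- A component with at least one edge has at most twice as many vertices as edges. -/
lemma comp_card (h₀ h₁ : Fin n → Fin m) (w : Fin m ⊕ Fin m) (hw : 1 ≤ cuckooC n m h₀ h₁ w) :
    (Finset.univ.filter fun u => cuckooConn n m h₀ h₁ u w).card ≤ 2 * cuckooC n m h₀ h₁ w := by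
  have hC : cuckooC n m h₀ h₁ w
      = (Finset.univ.filter fun x => cuckooConn n m h₀ h₁ (Sum.inl (h₀ x)) w).card := by
    unfold cuckooC
    rw [Nat.card_eq_fintype_card, Fintype.card_subtype]
  rw [hC] at hw ⊢
  set S := Finset.univ.filter fun x => cuckooConn n m h₀ h₁ (Sum.inl (h₀ x)) w with hS
  obtain ⟨x0, hx0⟩ := Finset.card_pos.1 hw
  have hx0' := (Finset.mem_filter.1 hx0).2
  have hsub : (Finset.univ.filter fun u => cuckooConn n m h₀ h₁ u w)
      ⊆ S.image (fun x => (Sum.inl (h₀ x) : Fin m ⊕ Fin m)) ∪ S.image (fun x => Sum.inr (h₁ x)) := by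
    intro u hu
    have hu' := (Finset.mem_filter.1 hu).2
    have : ∃ x, u = Sum.inl (h₀ x) ∨ u = Sum.inr (h₁ x) := by
      rcases conn_endpoint (conn_trans hu' (conn_symm hx0')) with h | h
      · exact ⟨x0, Or.inl h⟩
      · exact h.1
    obtain ⟨x, rfl | rfl⟩ := this
    · exact Finset.mem_union_left _ (Finset.mem_image.2 ⟨x, by simp [hS, hu'], rfl⟩)
    · exact Finset.mem_union_right _ (Finset.mem_image.2
        ⟨x, by simpa [hS] using conn_trans (conn_edge h₀ h₁ x) hu', rfl⟩)
  refine (Finset.card_le_card hsub).trans ((Finset.card_union_le _ _).trans ?_)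
  have a := Finset.card_image_le (s := S) (f := fun x => (Sum.inl (h₀ x) : Fin m ⊕ Fin m))
  have b := Finset.card_image_le (s := S) (f := fun x => (Sum.inr (h₁ x) : Fin m ⊕ Fin m))
  omega

lemma conn_transfer {h₀ h₁ k₀ k₁ : Fin n → Fin m} (x : Fin n)
    (e0 : ∀ y, y ≠ x → h₀ y = k₀ y) (e1 : ∀ y, y ≠ x → h₁ y = k₁ y) {v}
    (n1 : ¬ cuckooConn n m h₀ h₁ (Sum.inl (h₀ x)) v) {a b}
    (h : cuckooConn n m h₀ h₁ a b) :
    cuckooConn n m h₀ h₁ a v → cuckooConn n m k₀ k₁ a b := by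
  induction h with
  | rel a b h =>
    intro hv
    obtain ⟨y, rfl, rfl⟩ := h
    have hy : y ≠ x := by rintro rfl; exact n1 hv
    rw [e0 y hy, e1 y hy]
    exact conn_edge _ _ _
  | refl a => intro _; exact Relation.EqvGen.refl _
  | symm a b h ih => intro hv; exact conn_symm (ih (conn_trans h hv))
  | trans a b c h1 h2 ih1 ih2 =>
    intro hv
    exact conn_trans (ih1 hv) (ih2 (conn_trans (conn_symm h1) hv))

lemma conn_transfer' {h₀ h₁ k₀ k₁ : Fin n → Fin m} (x : Fin n)
    (e0 : ∀ y, y ≠ x → h₀ y = k₀ y) (e1 : ∀ y, y ≠ x → h₁ y = k₁ y) {v}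
    (n2 : ¬ cuckooConn n m h₀ h₁ (Sum.inl (k₀ x)) v)
    (n3 : ¬ cuckooConn n m h₀ h₁ (Sum.inr (k₁ x)) v) {a b}
    (h : cuckooConn n m k₀ k₁ a b) :
    (cuckooConn n m h₀ h₁ a v ∨ cuckooConn n m h₀ h₁ b v) → cuckooConn n m h₀ h₁ a b := by
  induction h with
  | rel a b h =>
    intro hv
    obtain ⟨y, rfl, rfl⟩ := h
    have hy : y ≠ x := by
      rintro rfl
      rcases hv with hv | hv
      · exact n2 hv
      · exact n3 hv
    rw [← e0 y hy, ← e1 y hy]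
    exact conn_edge _ _ _
  | refl a => intro _; exact Relation.EqvGen.refl _
  | symm a b h ih => intro hv; exact conn_symm (ih hv.symm)
  | trans a b c h1 h2 ih1 ih2 =>
    rintro (hv | hv)
    · have := ih1 (Or.inl hv)
      exact conn_trans this (ih2 (Or.inl (conn_trans (conn_symm this) hv)))
    · have := ih2 (Or.inr hv)
      exact conn_trans (ih1 (Or.inr (conn_trans this hv))) this

lemma C_eq_of_far {h₀ h₁ k₀ k₁ : Fin n → Fin m} (x : Fin n)
    (e0 : ∀ y, y ≠ x → h₀ y = k₀ y) (e1 : ∀ y, y ≠ x → h₁ y = k₁ y) {v}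
    (n1 : ¬ cuckooConn n m h₀ h₁ (Sum.inl (h₀ x)) v)
    (n2 : ¬ cuckooConn n m h₀ h₁ (Sum.inl (k₀ x)) v)
    (n3 : ¬ cuckooConn n m h₀ h₁ (Sum.inr (k₁ x)) v) :
    cuckooC n m h₀ h₁ v = cuckooC n m k₀ k₁ v := by
  have hiff : ∀ u, cuckooConn n m h₀ h₁ u v ↔ cuckooConn n m k₀ k₁ u v := fun u =>
    ⟨fun h => conn_transfer x e0 e1 n1 h h,
      fun h => conn_transfer' x e0 e1 n2 n3 h (Or.inr (Relation.EqvGen.refl _))⟩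
  unfold cuckooC
  have : ∀ y, cuckooConn n m h₀ h₁ (Sum.inl (h₀ y)) v ↔
      cuckooConn n m k₀ k₁ (Sum.inl (k₀ y)) v := by
    intro y
    by_cases hy : y = x
    · subst hy
      exact ⟨fun h => absurd h n1, fun h => absurd ((hiff _).2 h) n2⟩
    · rw [e0 y hy]; exact hiff _
  simp only [this]

lemma X_le {h₀ h₁ k₀ k₁ : Fin n → Fin m} (x : Fin n)
    (e0 : ∀ y, y ≠ x → h₀ y = k₀ y) (e1 : ∀ y, y ≠ x → h₁ y = k₁ y) (i : ℕ) (hi : 1 ≤ i) :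
    cuckooX n m h₀ h₁ i ≤ cuckooX n m k₀ k₁ i + 6 * i := by
  unfold cuckooX
  rw [Nat.card_eq_fintype_card, Nat.card_eq_fintype_card, Fintype.card_subtype,
    Fintype.card_subtype]
  let T : Fin m ⊕ Fin m → Finset (Fin m ⊕ Fin m) := fun w =>
    Finset.univ.filter fun u => cuckooConn n m h₀ h₁ u w ∧ cuckooC n m h₀ h₁ u = i
  have hT : ∀ w, (T w).card ≤ 2 * i := by
    intro w
    by_cases hw : cuckooC n m h₀ h₁ w = i
    · have := comp_card h₀ h₁ w (by omega)
      rw [hw] at this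
      refine (Finset.card_le_card ?_).trans this
      intro u hu
      simp only [T, Finset.mem_filter] at hu ⊢
      exact ⟨hu.1, hu.2.1⟩
    · have : T w = ∅ := by
        refine Finset.filter_eq_empty_iff.2 ?_
        rintro u _ ⟨h1, h2⟩
        exact hw ((C_congr h1).symm.trans h2)
      simp [this]
  have hsub : (Finset.univ.filter fun v => cuckooC n m h₀ h₁ v = i) ⊆
      (Finset.univ.filter fun v => cuckooC n m k₀ k₁ v = i) ∪
        (T (Sum.inl (h₀ x)) ∪ (T (Sum.inl (k₀ x)) ∪ T (Sum.inr (k₁ x)))) := by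
    intro v hv
    have hv' := (Finset.mem_filter.1 hv).2
    simp only [T, Finset.mem_union, Finset.mem_filter, Finset.mem_univ, true_and]
    by_contra hcon
    push Not at hcon
    obtain ⟨c0, c1, c2, c3⟩ := hcon
    refine c0 ?_
    rw [← C_eq_of_far x e0 e1 (fun h => c1 (conn_symm h) hv') (fun h => c2 (conn_symm h) hv')
      (fun h => c3 (conn_symm h) hv')]
    exact hv'
  have h1 := Finset.card_le_card hsub
  have h2 := Finset.card_union_le (Finset.univ.filter fun v => cuckooC n m k₀ k₁ v = i)
    (T (Sum.inl (h₀ x)) ∪ (T (Sum.inl (k₀ x)) ∪ T (Sum.inr (k₁ x))))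
  have h3 := Finset.card_union_le (T (Sum.inl (h₀ x))) (T (Sum.inl (k₀ x)) ∪ T (Sum.inr (k₁ x)))
  have h4 := Finset.card_union_le (T (Sum.inl (k₀ x))) (T (Sum.inr (k₁ x)))
  have := hT (Sum.inl (h₀ x))
  have := hT (Sum.inl (k₀ x))
  have := hT (Sum.inr (k₁ x))
  omega

end graph

/-- Azuma-type concentration for `X_i`: there is a universal constant `c > 0` such that
for all positive `n`, `m`, all `i ≥ 1` and all real `λ > 0`,
`Pr(|X_i − E[X_i]| ≥ c·i·λ·√n) ≤ 2·e^{−λ²/2}`. -/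
theorem cuckoo_Xi_concentration :
    ∃ c : ℝ, 0 < c ∧ ∀ n m : ℕ, 0 < n → 0 < m → ∀ i : ℕ, 1 ≤ i → ∀ lam : ℝ, 0 < lam →
      cuckooPr n m (fun ω =>
          c * i * lam * Real.sqrt n ≤
            |(cuckooX n m ω.1 ω.2 i : ℝ)
              - cuckooE n m (fun ω' => (cuckooX n m ω'.1 ω'.2 i : ℝ))|)
        ≤ 2 * Real.exp (-lam ^ 2 / 2) := by
  refine ⟨6, by norm_num, ?_⟩
  intro n m hn hm i hi lam hl
  have : Nonempty (Fin m) := ⟨⟨0, hm⟩⟩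
  let e : (Fin n → Fin m × Fin m) ≃ HashPair n m := Equiv.arrowProdEquivProdArrow _ _ _
  let f : (Fin n → Fin m × Fin m) → ℝ := fun ω => (cuckooX n m (e ω).1 (e ω).2 i : ℝ)
  have hD : (0 : ℝ) < 6 * i := by
    have : (0 : ℝ) < i := by exact_mod_cast hi
    positivity
  have hf : ∀ ω x a, |f ω - f (Function.update ω x a)| ≤ 6 * i := by
    intro ω x a
    have q : ∀ y, y ≠ x → ω y = Function.update ω x a y := fun y hy => by
      rw [Function.update_of_ne hy]
    have q0 : ∀ y, y ≠ x → (e ω).1 y = (e (Function.update ω x a)).1 y := fun y hy =>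
      congrArg Prod.fst (q y hy)
    have q1 : ∀ y, y ≠ x → (e ω).2 y = (e (Function.update ω x a)).2 y := fun y hy =>
      congrArg Prod.snd (q y hy)
    have a1 : f ω ≤ f (Function.update ω x a) + 6 * i := by
      simp only [f]
      exact_mod_cast X_le x q0 q1 i hi
    have a2 : f (Function.update ω x a) ≤ f ω + 6 * i := by
      simp only [f]
      exact_mod_cast X_le x (fun y hy => (q0 y hy).symm) (fun y hy => (q1 y hy).symm) i hi
    rw [abs_le]
    constructor <;> linarith
  have main := tail_abs (6 * i) lam hD hl n hn f hf
  have hcard : (Nat.card (HashPair n m) : ℝ) = (Fintype.card (Fin m × Fin m) : ℝ) ^ n := by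
    rw [← Nat.card_congr e, Nat.card_eq_fintype_card]
    simp
  have hE : cuckooE n m (fun ω' => (cuckooX n m ω'.1 ω'.2 i : ℝ))
      = (∑ ω', f ω') / (Fintype.card (Fin m × Fin m) : ℝ) ^ n := by
    unfold cuckooE
    rw [hcard, ← e.sum_comp]
  have hpos : (0 : ℝ) < (Fintype.card (Fin m × Fin m) : ℝ) ^ n := by
    have : (0 : ℝ) < Fintype.card (Fin m × Fin m) := by exact_mod_cast Fintype.card_pos
    positivity
  unfold cuckooPr
  rw [hE, hcard, div_le_iff₀ hpos, mul_comm (2 * _)]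
  refine le_trans (le_of_eq ?_) main
  congr 1
  exact Nat.card_congr (e.subtypeEquiv fun ω => Iff.rfl).symm
end
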